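/- arXiv:2104.14530 — 2 statements merged into one kernel-verified Lean document; each statement's English description precedes it below -/
import Mathlib

section
/- Let q₊,q₋ ∈ ℂ. The signed reflection function φ_{q₊,q₋} is positive definite on B(∞) if and only if either (a) there exist M,N ∈ ℕ with M+N ≠ 0 and ε ∈ {1,−1} such that q₊ = ε/(M+N) and q₋ = (M−N)/(M+N), or (b) q₊ = 0 and q₋ is real with −1 ≤ q₋ ≤ 1. -/
/-!
STATEMENT 3: φ_{q₊,q₋} is positive definite on B(∞) iff
(a) q₊ = ε/(M+N), q₋ = (M−N)/(M+N) for some M,N ∈ ℕ with M+N ≠ 0 and ε ∈ {1,−1}, or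
(b) q₊ = 0 and q₋ is real with −1 ≤ q₋ ≤ 1.
-/

open scoped ComplexOrder

noncomputable section

namespace TypeB

/-- The nontrivial orbits (cycles) of a permutation. -/
def ntOrbits {X : Type*} (σ : Equiv.Perm X) : Set (Set X) :=
  {O | ∃ i : X, σ i ≠ i ∧ O = {j | σ.SameCycle i j}}

/-- Negation of a set of integers. -/
def negSet (B : Set ℤ) : Set ℤ := (fun x : ℤ => -x) '' B

/-- The negative cycles (orbits invariant under negation). -/
def negOrbits (σ : Equiv.Perm ℤ) : Set (Set ℤ) := {O ∈ ntOrbits σ | negSet O = O}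

/-- The positive cycles (orbits not invariant under negation; they come in mirror pairs). -/
def posOrbits (σ : Equiv.Perm ℤ) : Set (Set ℤ) := {O ∈ ntOrbits σ | negSet O ≠ O}

/-- ‖ρ⁺‖ + ‖ρ⁻‖ for σ of cycle type (ρ⁺,ρ⁻): each mirror pair of positive cycles of
common length m contributes m−1, each negative cycle of length 2k contributes k−1. -/
def expPlus (σ : Equiv.Perm ℤ) : ℕ :=
  (∑ᶠ O ∈ posOrbits σ, (O.ncard - 1)) / 2 + ∑ᶠ O ∈ negOrbits σ, (O.ncard / 2 - 1)

/-- ℓ(ρ⁻): the number of negative cycles of σ. -/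
def negCount (σ : Equiv.Perm ℤ) : ℕ := (negOrbits σ).ncard

/-- The signed reflection function φ_{q₊,q₋}(σ) = q₊^{‖ρ⁺‖+‖ρ⁻‖} q₋^{ℓ(ρ⁻)}. -/
def phi (qp qm : ℂ) (σ : Equiv.Perm ℤ) : ℂ := qp ^ expPlus σ * qm ^ negCount σ

/-- The infinite hyperoctahedral group B(∞): finitary permutations of ℤ∖{0}
(permutations of ℤ fixing 0, which is forced) commuting with negation. -/
def BInfSet : Set (Equiv.Perm ℤ) :=
  {σ | (∀ i : ℤ, σ (-i) = -σ i) ∧ {i : ℤ | σ i ≠ i}.Finite}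

/-- A function on a group is positive definite on a subset S: for all g₁,…,g_k ∈ S and
z₁,…,z_k ∈ ℂ, the hermitian sum Σ z_i conj(z_j) f(g_j⁻¹ g_i) is real and ≥ 0. -/
def IsPosDefOn {G : Type*} [Group G] (S : Set G) (f : G → ℂ) : Prop :=
  ∀ (k : ℕ) (g : Fin k → G), (∀ i, g i ∈ S) → ∀ z : Fin k → ℂ,
    0 ≤ ∑ i : Fin k, ∑ j : Fin k, z i * (starRingEnd ℂ) (z j) * f ((g j)⁻¹ * g i)

/-!
If a signed permutation `f` fixes `n`, composing it with the reflection exchanging `n` and `m`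
multiplies `φ` by `1`, `q₋` or `q₊` according as `m = n`, `m = -n` or neither. As every signed
permutation is a product of such reflections, this recursion determines `φ` from `φ 1`.

Summed over the hyperoctahedral group of rank `N` it gives `∏_{j < N} (1 + q₋ + 2 j q₊)`, which a
positive definite `φ` makes nonnegative for every `N`. Twisting by the sign of the action on
`{±1, …, ±L}` or on the absolute values `{1, …, L}` replaces `q₋` by `-q₋` or `q₊` by `-q₊`, so for
`q₊ ≠ 0` the products `∏_{j < N} (1 ± q₋ - 2 j |q₊|)` are nonnegative too. Hence they must reach a
vanishing factor: `1 + q₋ = 2 M |q₊|` and `1 - q₋ = 2 N |q₊|`.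

Conversely, take `M + N` colours with an involution `τ` having `M - N ≥ 0` fixed points. The number
of colourings `x` with `x (-i) = τ (x i)` fixed by a signed permutation obeys the same recursion
with `q₊ = 1 / (M + N)` and `q₋ = (M - N) / (M + N)`, so this permutation character is a positive
multiple of `φ`. Sign twists give the other cases of (a), and the functions of (b) are limits of
these.
-/

open Equiv Equiv.Perm Filter
open scoped Topology Pointwise

section PositiveDefinite

variable {G : Type*} [Group G] {S T : Set G} {f : G → ℂ}

theorem IsPosDefOn.mono (hf : IsPosDefOn T f) (hST : S ⊆ T) : IsPosDefOn S f :=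
  fun k g hg => hf k g fun i => hST (hg i)

theorem IsPosDefOn.sum_nonneg (hf : IsPosDefOn S f) {ι : Type*} [Fintype ι] (g : ι → G)
    (hg : ∀ i, g i ∈ S) (z : ι → ℂ) :
    0 ≤ ∑ i, ∑ j, z i * (starRingEnd ℂ) (z j) * f ((g j)⁻¹ * g i) := by
  let e := (Fintype.equivFin ι).symm
  refine (hf _ (g ∘ e) (fun i => hg _) (z ∘ e)).trans_eq ?_
  rw [← e.sum_comp]
  exact Finset.sum_congr rfl fun i _ =>
    e.sum_comp fun j => z (e i) * (starRingEnd ℂ) (z j) * f ((g j)⁻¹ * g (e i))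

theorem IsPosDefOn.sum_univ_nonneg [Fintype G] (hf : IsPosDefOn Set.univ f) : 0 ≤ ∑ g, f g := by
  have hsum (i : G) : ∑ j, f (i⁻¹ * j) = ∑ g, f g := Equiv.sum_comp (Equiv.mulLeft i⁻¹) f
  have h := hf.sum_nonneg id (fun _ => Set.mem_univ _) 1
  rw [Finset.sum_comm] at h
  simp only [id, Pi.one_apply, map_one, one_mul, hsum, Finset.sum_const, nsmul_eq_mul] at h
  have hcard : (0 : ℂ) < (Finset.univ : Finset G).card :=
    Nat.cast_pos.2 (Finset.card_pos.2 Finset.univ_nonempty)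
  exact le_of_mul_le_mul_left ((mul_zero _).trans_le h) hcard

theorem IsPosDefOn.comp_hom {H : Type*} [Group H] (hf : IsPosDefOn S f) (φ : H →* G) :
    IsPosDefOn (φ ⁻¹' S) fun h => f (φ h) := fun k g hg z => by
  simpa only [map_mul, map_inv] using hf k (fun i => φ (g i)) hg z

theorem isPosDefOn_univ_coe_iff {H : Subgroup G} :
    IsPosDefOn Set.univ (fun g : H => f g) ↔ IsPosDefOn (H : Set G) f :=
  ⟨fun hf k g hg => hf k (fun i => ⟨g i, hg i⟩) fun _ => Set.mem_univ _,
    fun hf k g _ => hf k (fun i => (g i : G)) fun i => (g i).2⟩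

theorem IsPosDefOn.character_mul (hf : IsPosDefOn S f) (χ : G →* ℤˣ) :
    IsPosDefOn S fun g => ((χ g : ℤ) : ℂ) * f g := by
  intro k g hg z
  refine (hf k g hg fun i => z i * ((χ (g i) : ℤ) : ℂ)).trans_eq ?_
  refine Finset.sum_congr rfl fun i _ => Finset.sum_congr rfl fun j _ => ?_
  simp only [map_mul, map_inv, Int.units_inv_eq_self, Units.val_mul, Int.cast_mul, map_intCast]
  ring

theorem isPosDefOn_mul_const_iff {c : ℂ} (hc : 0 < c) :
    IsPosDefOn S (fun g => f g * c) ↔ IsPosDefOn S f := by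
  refine forall₄_congr fun k g _ z => ?_
  simp only [← mul_assoc, ← Finset.sum_mul]
  exact ⟨fun h => le_of_mul_le_mul_right ((zero_mul c).trans_le h) hc,
    fun h => mul_nonneg h hc.le⟩

theorem IsPosDefOn.of_tendsto {ι : Type*} {l : Filter ι} [l.NeBot] {F : ι → G → ℂ}
    (hF : ∀ᶠ i in l, IsPosDefOn S (F i)) (hlim : ∀ g ∈ S, ∀ h ∈ S,
      Tendsto (fun i => F i (g⁻¹ * h)) l (𝓝 (f (g⁻¹ * h)))) : IsPosDefOn S f := by
  intro k g hg z
  refine ge_of_tendsto (tendsto_finsetSum _ fun i _ => tendsto_finsetSum _ fun j _ =>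
    (hlim _ (hg j) _ (hg i)).const_mul _) ?_
  filter_upwards [hF] with n hn using hn k g hg z

theorem isPosDefOn_of_eq_sum_mul_conj {P : Type*} (s : Finset P) (v : G → P → ℂ)
    (hv : ∀ g ∈ S, ∀ h ∈ S, f (h⁻¹ * g) = ∑ p ∈ s, v g p * (starRingEnd ℂ) (v h p)) :
    IsPosDefOn S f := by
  intro k g hg z
  calc (0 : ℂ)
      ≤ ∑ p ∈ s, (∑ i, z i * v (g i) p) * (starRingEnd ℂ) (∑ j, z j * v (g j) p) :=
        Finset.sum_nonneg fun p _ => mul_star_self_nonneg _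
    _ = ∑ i, ∑ j, ∑ p ∈ s, z i * v (g i) p * (starRingEnd ℂ) (z j * v (g j) p) := by
        simp only [map_sum, Finset.sum_mul_sum]
        rw [Finset.sum_comm]
        exact Finset.sum_congr rfl fun i _ => Finset.sum_comm
    _ = ∑ i, ∑ j, z i * (starRingEnd ℂ) (z j) * f ((g j)⁻¹ * g i) := by
        refine Finset.sum_congr rfl fun i _ => Finset.sum_congr rfl fun j _ => ?_
        rw [hv _ (hg i) _ (hg j), Finset.mul_sum]
        refine Finset.sum_congr rfl fun p _ => ?_
        rw [map_mul]
        ring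

theorem isPosDefOn_card_fixedPoints {α : Type*} [DecidableEq α] [MulAction G α] {X : Finset α}
    (hX : ∀ g ∈ S, ∀ x ∈ X, g • x ∈ X) :
    IsPosDefOn S fun g => ((X.filter fun x => g • x = x).card : ℂ) := by
  refine isPosDefOn_of_eq_sum_mul_conj (X ×ˢ X)
    (fun g p => if g • p.1 = p.2 then 1 else 0) fun g hg h _ => ?_
  rw [Finset.card_filter, Nat.cast_sum, Finset.sum_product]
  refine Finset.sum_congr rfl fun x hx => ?_
  rw [Finset.sum_eq_single_of_mem (g • x) (hX g hg x hx) fun y _ hy => by simp [hy.symm]]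
  simp [mul_smul, inv_smul_eq_iff, @eq_comm _ (h • x)]

end PositiveDefinite

section Cycles

variable {X : Type*} {f u : Perm X} {x y : X} {O T : Set X}

/-- The orbit of `x` under the iterates of `f`; unlike the members of `ntOrbits f` it may be a
singleton. -/
def cycleOrbit (f : Perm X) (x : X) : Set X := {y | f.SameCycle x y}

theorem self_mem_cycleOrbit (f : Perm X) (x : X) : x ∈ cycleOrbit f x := SameCycle.refl f x

theorem apply_mem_cycleOrbit (f : Perm X) (x : X) : f x ∈ cycleOrbit f x :=
  sameCycle_apply_right.2 (SameCycle.refl f x)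

theorem cycleOrbit_eq_of_mem (h : y ∈ cycleOrbit f x) : cycleOrbit f y = cycleOrbit f x :=
  Set.ext fun _ => ⟨fun hy => h.trans hy, fun hx => (SameCycle.symm h).trans hx⟩

theorem cycleOrbit_mem_ntOrbits (h : f x ≠ x) : cycleOrbit f x ∈ ntOrbits f := ⟨x, h, rfl⟩

theorem mem_stabilizer_cycleOrbit (f : Perm X) (x : X) :
    f ∈ MulAction.stabilizer (Perm X) (cycleOrbit f x) :=
  MulAction.mem_stabilizer_set.2 fun _ => sameCycle_apply_right

theorem mem_stabilizer_of_fixes (hu : ∀ x ∈ T, u x = x) :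
    u ∈ MulAction.stabilizer (Perm X) T := by
  refine MulAction.mem_stabilizer_set.2 fun x => ⟨fun hx => ?_, fun hx => ?_⟩
  · rw [Perm.smul_def] at hx
    rwa [u.injective (hu _ hx)] at hx
  · rwa [Perm.smul_def, hu x hx]

theorem cycleOrbit_subset (hf : f ∈ MulAction.stabilizer (Perm X) T) (hx : x ∈ T) :
    cycleOrbit f x ⊆ T := by
  rintro _ ⟨i, rfl⟩
  exact (MulAction.mem_stabilizer_set.1 (zpow_mem hf i) x).2 hx

theorem cycleOrbit_of_fixed (h : f x = x) : cycleOrbit f x = {x} :=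
  (cycleOrbit_subset (T := {x}) (mem_stabilizer_of_fixes fun _ hy => by rwa [hy]) rfl).antisymm
    (Set.singleton_subset_iff.2 (self_mem_cycleOrbit f x))

theorem eq_cycleOrbit_of_mem_ntOrbits (hO : O ∈ ntOrbits f) (hx : x ∈ O) : O = cycleOrbit f x := by
  obtain ⟨i, -, rfl⟩ := hO
  exact (cycleOrbit_eq_of_mem hx).symm

theorem apply_ne_of_mem_ntOrbits (hO : O ∈ ntOrbits f) (hx : x ∈ O) : f x ≠ x := by
  obtain ⟨i, hi, rfl⟩ := hO
  exact fun h => hi ((SameCycle.apply_eq_self_iff hx).2 h)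

theorem mem_ntOrbits_mul_of_fixes (hO : O ∈ ntOrbits f) (hu : ∀ x ∈ O, u x = x) :
    O ∈ ntOrbits (u * f) := by
  obtain ⟨i, hi, rfl⟩ := hO
  change cycleOrbit f i ∈ _
  have hle : cycleOrbit (u * f) i ⊆ cycleOrbit f i :=
    cycleOrbit_subset (mul_mem (mem_stabilizer_of_fixes hu) (mem_stabilizer_cycleOrbit f i))
      (self_mem_cycleOrbit f i)
  have hge : cycleOrbit f i ⊆ cycleOrbit (u * f) i :=
    cycleOrbit_subset
      ((Subgroup.mul_mem_cancel_left _ (mem_stabilizer_of_fixes fun x hx => hu x (hle hx))).1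
        (mem_stabilizer_cycleOrbit (u * f) i)) (self_mem_cycleOrbit _ i)
  refine ⟨i, ?_, hge.antisymm hle⟩
  rwa [Perm.mul_apply, hu _ (apply_mem_cycleOrbit f i)]

end Cycles

section SignedSwap

/-- The reflection exchanging `n` and `m` (hence `-n` and `-m`); for `m = -n` it is the sign change
at `n`, for `m = n` the identity. -/
def signedSwap (m n : ℤ) : Perm ℤ := if m = -n then swap m n else swap (-m) (-n) * swap m n

/-- The value of `φ_{q₊,q₋}` on `signedSwap m n`. -/
def reflectionWeight (qp qm : ℂ) (m n : ℤ) : ℂ := if m = n then 1 else if m = -n then qm else qp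

variable {m n : ℤ}

theorem signedSwap_apply_of_ne {x : ℤ} (hm : x ≠ m) (hn : x ≠ n) (hm' : x ≠ -m) (hn' : x ≠ -n) :
    signedSwap m n x = x := by
  unfold signedSwap
  split_ifs <;> simp [swap_apply_of_ne_of_ne, *]

theorem signedSwap_self (m : ℤ) : signedSwap m m = 1 := by
  unfold signedSwap
  split_ifs <;> ext <;> simp

theorem signedSwap_apply_right (hm : m ≠ 0) (hn : n ≠ 0) : signedSwap m n n = m := by
  simp only [signedSwap, apply_ite DFunLike.coe, ite_apply, Perm.mul_apply, swap_apply_right]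
  split_ifs
  · rfl
  · exact swap_apply_of_ne_of_ne (by omega) (by omega)

theorem signedSwap_apply_neg (hm : m ≠ 0) (hn : n ≠ 0) (x : ℤ) :
    signedSwap m n (-x) = -signedSwap m n x := by
  simp only [signedSwap, apply_ite DFunLike.coe, ite_apply, Perm.mul_apply, swap_apply_def]
  grind

theorem signedSwap_mul_self (hm : m ≠ 0) (hn : n ≠ 0) : signedSwap m n * signedSwap m n = 1 := by
  ext x
  simp only [signedSwap, apply_ite DFunLike.coe, ite_apply, Perm.mul_apply, swap_apply_def,
    Perm.one_apply]
  grind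

theorem signedSwap_apply_left (hm : m ≠ 0) (hn : n ≠ 0) : signedSwap m n m = n := by
  nth_rewrite 2 [← signedSwap_apply_right hm hn]
  rw [← Perm.mul_apply, signedSwap_mul_self hm hn, Perm.one_apply]

theorem signedSwap_mem_stabilizer {T : Set ℤ} (h : m ∈ T ↔ n ∈ T) (h' : -m ∈ T ↔ -n ∈ T) :
    signedSwap m n ∈ MulAction.stabilizer (Perm ℤ) T := by
  unfold signedSwap
  split_ifs
  · exact swap_mem_stabilizer.2 h
  · exact mul_mem (swap_mem_stabilizer.2 h') (swap_mem_stabilizer.2 h)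

theorem signedSwap_mem_BInfSet (hm : m ≠ 0) (hn : n ≠ 0) : signedSwap m n ∈ BInfSet := by
  refine ⟨signedSwap_apply_neg hm hn, (Set.toFinite {m, n, -m, -n}).subset fun x hx => ?_⟩
  by_contra h
  simp only [Set.mem_insert_iff, Set.mem_singleton_iff, not_or] at h
  exact hx (signedSwap_apply_of_ne h.1 h.2.1 h.2.2.1 h.2.2.2)

end SignedSwap

section CycleType

variable {O : Set ℤ} {R : Set (Set ℤ)}

theorem mem_negSet {x : ℤ} : x ∈ negSet O ↔ -x ∈ O := by
  simp [negSet]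

theorem negSet_negSet (O : Set ℤ) : negSet (negSet O) = O :=
  Set.ext fun x => by simp [mem_negSet]

theorem ncard_negSet (O : Set ℤ) : (negSet O).ncard = O.ncard :=
  Set.ncard_image_of_injective O neg_injective

/-- The exponent of `q₊` contributed by a set `R` of cycles, with `expPlus σ` the case
`R = ntOrbits σ`. -/
def cycleExponent (R : Set (Set ℤ)) : ℕ :=
  (∑ᶠ O ∈ {O ∈ R | negSet O ≠ O}, (O.ncard - 1)) / 2 +
    ∑ᶠ O ∈ {O ∈ R | negSet O = O}, (O.ncard / 2 - 1)

/-- The exponent of `q₋` contributed by a set `R` of cycles, with `negCount σ` the case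
`R = ntOrbits σ`. -/
def negCycleCount (R : Set (Set ℤ)) : ℕ := {O ∈ R | negSet O = O}.ncard

theorem sep_insert_neg (hO : negSet O = O) :
    {P ∈ insert O R | negSet P ≠ P} = {P ∈ R | negSet P ≠ P} ∧
      {P ∈ insert O R | negSet P = P} = insert O {P ∈ R | negSet P = P} := by
  constructor <;> ext P <;> simp only [Set.mem_insert_iff, Set.mem_ofPred_eq] <;> grind

theorem sep_insert_pair (hO : negSet O ≠ O) :
    {P ∈ insert O (insert (negSet O) R) | negSet P ≠ P} =
        insert O (insert (negSet O) {P ∈ R | negSet P ≠ P}) ∧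
      {P ∈ insert O (insert (negSet O) R) | negSet P = P} = {P ∈ R | negSet P = P} := by
  have := negSet_negSet O
  constructor <;> ext P <;> simp only [Set.mem_insert_iff, Set.mem_ofPred_eq] <;> grind

theorem cycleExponent_insert_neg (hR : R.Finite) (hOR : O ∉ R) (hO : negSet O = O) :
    cycleExponent (insert O R) = cycleExponent R + (O.ncard / 2 - 1) := by
  unfold cycleExponent
  rw [(sep_insert_neg hO).1, (sep_insert_neg hO).2,
    finsum_mem_insert _ (fun h => hOR h.1) (hR.sep _)]
  omega

theorem negCycleCount_insert_neg (hR : R.Finite) (hOR : O ∉ R) (hO : negSet O = O) :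
    negCycleCount (insert O R) = negCycleCount R + 1 := by
  unfold negCycleCount
  rw [(sep_insert_neg hO).2, Set.ncard_insert_of_notMem (fun h => hOR h.1) (hR.sep _)]

theorem cycleExponent_insert_pair (hR : R.Finite) (hOR : O ∉ R) (hOR' : negSet O ∉ R)
    (hO : negSet O ≠ O) :
    cycleExponent (insert O (insert (negSet O) R)) = cycleExponent R + (O.ncard - 1) := by
  unfold cycleExponent
  rw [(sep_insert_pair hO).1, (sep_insert_pair hO).2,
    finsum_mem_insert _ _ ((hR.sep _).insert _),
    finsum_mem_insert _ (fun h => hOR' h.1) (hR.sep _), ncard_negSet]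
  · omega
  · rintro (h | h)
    exacts [hO h.symm, hOR h.1]

theorem negCycleCount_insert_pair (hO : negSet O ≠ O) :
    negCycleCount (insert O (insert (negSet O) R)) = negCycleCount R := by
  unfold negCycleCount
  rw [(sep_insert_pair hO).2]

end CycleType

section SignedOrbits

variable {g : Perm ℤ} {m x y : ℤ}

/-- The union of the cycle of `m` and its mirror image. -/
def signedOrbit (g : Perm ℤ) (m : ℤ) : Set ℤ := cycleOrbit g m ∪ cycleOrbit g (-m)

/-- The nontrivial cycles of `g` that do not pass through `m` or `-m`. -/
def cyclesAvoiding (g : Perm ℤ) (m : ℤ) : Set (Set ℤ) := {O ∈ ntOrbits g | m ∉ O ∧ -m ∉ O}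

theorem sameCycle_neg (hg : g ∈ BInfSet) (h : g.SameCycle x y) : g.SameCycle (-x) (-y) := by
  have hconj : Equiv.neg ℤ * g * (Equiv.neg ℤ)⁻¹ = g := by
    ext i
    exact (congrArg Neg.neg (hg.1 i)).trans (neg_neg _)
  simpa [hconj] using h.conj (g := Equiv.neg ℤ)

theorem negSet_cycleOrbit (hg : g ∈ BInfSet) (x : ℤ) :
    negSet (cycleOrbit g x) = cycleOrbit g (-x) := by
  ext y
  rw [mem_negSet]
  constructor <;> intro h
  · exact neg_neg y ▸ sameCycle_neg hg h
  · exact neg_neg x ▸ sameCycle_neg hg h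

theorem negSet_cycleOrbit_eq_self_iff (hg : g ∈ BInfSet) :
    negSet (cycleOrbit g x) = cycleOrbit g x ↔ g.SameCycle x (-x) := by
  rw [negSet_cycleOrbit hg]
  exact ⟨fun h => h.subset (self_mem_cycleOrbit g (-x)), cycleOrbit_eq_of_mem⟩

theorem disjoint_cycleOrbit_neg (h : ¬g.SameCycle x (-x)) :
    Disjoint (cycleOrbit g x) (cycleOrbit g (-x)) :=
  Set.disjoint_left.2 fun _ hy hy' => h (SameCycle.trans hy (SameCycle.symm hy'))

theorem cycleOrbit_finite (hg : g ∈ BInfSet) (x : ℤ) : (cycleOrbit g x).Finite := by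
  by_cases hx : g x = x
  · rw [cycleOrbit_of_fixed hx]
    exact Set.finite_singleton x
  · refine hg.2.subset fun y hy h => hx ?_
    exact (SameCycle.apply_eq_self_iff hy).2 h

theorem ntOrbits_finite (hg : g ∈ BInfSet) : (ntOrbits g).Finite := by
  refine (hg.2.image (cycleOrbit g)).subset ?_
  rintro _ ⟨i, hi, rfl⟩
  exact ⟨i, hi, rfl⟩

theorem ntOrbits_of_fixed (hg : g ∈ BInfSet) (h : g m = m) : ntOrbits g = cyclesAvoiding g m := by
  refine (Set.sep_eq_self_iff_mem_true.2 fun O hO => ⟨fun hm => ?_, fun hm => ?_⟩).symm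
  · exact apply_ne_of_mem_ntOrbits hO hm h
  · exact apply_ne_of_mem_ntOrbits hO hm ((hg.1 m).trans (congrArg _ h))

theorem ntOrbits_of_not_fixed (hg : g ∈ BInfSet) (h : g m ≠ m) : ntOrbits g =
    insert (cycleOrbit g m) (insert (negSet (cycleOrbit g m)) (cyclesAvoiding g m)) := by
  rw [negSet_cycleOrbit hg]
  ext O
  constructor
  · intro hO
    by_cases hm : m ∈ O
    · exact Or.inl (eq_cycleOrbit_of_mem_ntOrbits hO hm)
    by_cases hm' : -m ∈ O
    · exact Or.inr (Or.inl (eq_cycleOrbit_of_mem_ntOrbits hO hm'))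
    · exact Or.inr (Or.inr ⟨hO, hm, hm'⟩)
  · rintro (rfl | rfl | hO)
    · exact cycleOrbit_mem_ntOrbits h
    · exact cycleOrbit_mem_ntOrbits fun h' => h (neg_injective ((hg.1 m).symm.trans h'))
    · exact hO.1

theorem cyclesAvoiding_finite (hg : g ∈ BInfSet) (m : ℤ) : (cyclesAvoiding g m).Finite :=
  (ntOrbits_finite hg).sep _

theorem cycleOrbit_notMem_cyclesAvoiding : cycleOrbit g m ∉ cyclesAvoiding g m :=
  fun h => h.2.1 (self_mem_cycleOrbit g m)

theorem expPlus_eq_add_signedOrbit (hg : g ∈ BInfSet) (hm : m ≠ 0) :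
    expPlus g = cycleExponent (cyclesAvoiding g m) + ((signedOrbit g m).ncard / 2 - 1) := by
  have hfin := cyclesAvoiding_finite hg m
  have hneg : negSet (cycleOrbit g m) ∉ cyclesAvoiding g m := by
    rw [negSet_cycleOrbit hg]
    exact fun h => h.2.2 (self_mem_cycleOrbit g _)
  change cycleExponent (ntOrbits g) = _
  by_cases hfix : g m = m
  · have hcard : (signedOrbit g m).ncard = 2 := by
      rw [signedOrbit, cycleOrbit_of_fixed hfix,
        cycleOrbit_of_fixed ((hg.1 m).trans (congrArg _ hfix))]
      exact Set.ncard_pair (by omega)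
    rw [ntOrbits_of_fixed hg hfix, hcard, Nat.div_self two_pos, Nat.sub_self, add_zero]
  by_cases hc : g.SameCycle m (-m)
  · have hO := (negSet_cycleOrbit_eq_self_iff hg).2 hc
    rw [ntOrbits_of_not_fixed hg hfix, hO, Set.insert_eq_of_mem (Set.mem_insert _ _),
      cycleExponent_insert_neg hfin cycleOrbit_notMem_cyclesAvoiding hO, signedOrbit,
      cycleOrbit_eq_of_mem hc, Set.union_self]
  · have hO := mt (negSet_cycleOrbit_eq_self_iff hg).1 hc
    have hcard : (signedOrbit g m).ncard = 2 * (cycleOrbit g m).ncard := by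
      rw [signedOrbit, Set.ncard_union_eq (disjoint_cycleOrbit_neg hc) (cycleOrbit_finite hg _)
        (cycleOrbit_finite hg _), ← negSet_cycleOrbit hg, ncard_negSet, two_mul]
    rw [ntOrbits_of_not_fixed hg hfix,
      cycleExponent_insert_pair hfin cycleOrbit_notMem_cyclesAvoiding hneg hO, hcard,
      Nat.mul_div_cancel_left _ two_pos]

open Classical in
theorem negCount_eq_add_ite (hg : g ∈ BInfSet) (hm : m ≠ 0) :
    negCount g = negCycleCount (cyclesAvoiding g m) + if g.SameCycle m (-m) then 1 else 0 := by
  have hfin := cyclesAvoiding_finite hg m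
  change negCycleCount (ntOrbits g) = _
  by_cases hfix : g m = m
  · have hc : ¬g.SameCycle m (-m) := fun hc => by
      have : -m = m := (cycleOrbit_of_fixed hfix).subset hc
      omega
    rw [ntOrbits_of_fixed hg hfix, if_neg hc, add_zero]
  split_ifs with hc
  · have hO := (negSet_cycleOrbit_eq_self_iff hg).2 hc
    rw [ntOrbits_of_not_fixed hg hfix, hO, Set.insert_eq_of_mem (Set.mem_insert _ _),
      negCycleCount_insert_neg hfin cycleOrbit_notMem_cyclesAvoiding hO]
  · rw [ntOrbits_of_not_fixed hg hfix,
      negCycleCount_insert_pair (mt (negSet_cycleOrbit_eq_self_iff hg).1 hc), add_zero]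

end SignedOrbits

section ReflectionFactorization

variable {f : Perm ℤ} {m n : ℤ}

theorem mul_mem_BInfSet {g h : Perm ℤ} (hg : g ∈ BInfSet) (hh : h ∈ BInfSet) :
    g * h ∈ BInfSet := by
  refine ⟨fun i => ?_, (hg.2.union hh.2).subset fun i hi => ?_⟩
  · rw [Perm.mul_apply, Perm.mul_apply, hh.1, hg.1]
  · by_contra hfix
    simp only [Set.mem_union, Set.mem_ofPred_eq, not_or, not_not] at hfix
    exact hi (by rw [Perm.mul_apply, hfix.2, hfix.1])

theorem apply_neg_of_fixed (hf : f ∈ BInfSet) (h : f n = n) : f (-n) = -n :=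
  (hf.1 n).trans (congrArg _ h)

theorem signedSwap_mul_apply (hm : m ≠ 0) (hn : n ≠ 0) (hfn : f n = n) :
    (signedSwap m n * f) n = m := by
  rw [Perm.mul_apply, hfn, signedSwap_apply_right hm hn]

theorem sameCycle_signedSwap_mul (hm : m ≠ 0) (hn : n ≠ 0) (hfn : f n = n) :
    (signedSwap m n * f).SameCycle m n := by
  have h := apply_mem_cycleOrbit (signedSwap m n * f) n
  rw [signedSwap_mul_apply hm hn hfn] at h
  exact SameCycle.symm h

theorem signedSwap_mul_mem_BInfSet (hf : f ∈ BInfSet) (hm : m ≠ 0) (hn : n ≠ 0) :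
    signedSwap m n * f ∈ BInfSet :=
  mul_mem_BInfSet (signedSwap_mem_BInfSet hm hn) hf

theorem cyclesAvoiding_signedSwap_mul (hf : f ∈ BInfSet) (hm : m ≠ 0) (hn : n ≠ 0)
    (hfn : f n = n) : cyclesAvoiding (signedSwap m n * f) m = cyclesAvoiding f m := by
  have hgn := signedSwap_mul_apply hm hn hfn
  have hg := signedSwap_mul_mem_BInfSet hf hm hn
  have hgf : signedSwap m n * (signedSwap m n * f) = f := by
    rw [← mul_assoc, signedSwap_mul_self hm hn, one_mul]
  set g := signedSwap m n * f
  have hfix {O : Set ℤ} (hmO : m ∉ O) (hmO' : -m ∉ O) (hnO : n ∉ O) (hnO' : -n ∉ O) :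
      ∀ x ∈ O, signedSwap m n x = x := fun x hx => by
    apply signedSwap_apply_of_ne <;> rintro rfl <;> contradiction
  ext O
  constructor
  · rintro ⟨hO, hmO, hmO'⟩
    have hmem {x : ℤ} (hx : x ∈ O) : g x ∈ O := by
      rw [eq_cycleOrbit_of_mem_ntOrbits hO hx]
      exact apply_mem_cycleOrbit g x
    have hnO : n ∉ O := fun h => hmO (hgn ▸ hmem h)
    have hnO' : -n ∉ O := fun h => hmO' (hgn ▸ hg.1 n ▸ hmem h)
    exact ⟨hgf ▸ mem_ntOrbits_mul_of_fixes hO (hfix hmO hmO' hnO hnO'), hmO, hmO'⟩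
  · rintro ⟨hO, hmO, hmO'⟩
    have hnO : n ∉ O := fun h => apply_ne_of_mem_ntOrbits hO h hfn
    have hnO' : -n ∉ O := fun h => apply_ne_of_mem_ntOrbits hO h (apply_neg_of_fixed hf hfn)
    exact ⟨mem_ntOrbits_mul_of_fixes hO (hfix hmO hmO' hnO hnO'), hmO, hmO'⟩

theorem self_mem_signedOrbit (f : Perm ℤ) (m : ℤ) : m ∈ signedOrbit f m :=
  Or.inl (self_mem_cycleOrbit f m)

theorem neg_mem_signedOrbit (f : Perm ℤ) (m : ℤ) : -m ∈ signedOrbit f m :=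
  Or.inr (self_mem_cycleOrbit f (-m))

theorem mem_stabilizer_signedOrbit (f : Perm ℤ) (m : ℤ) :
    f ∈ MulAction.stabilizer (Perm ℤ) (signedOrbit f m) :=
  MulAction.mem_stabilizer_set.2 fun _ => or_congr sameCycle_apply_right sameCycle_apply_right

theorem signedOrbit_subset {T : Set ℤ} (hf : f ∈ MulAction.stabilizer (Perm ℤ) T) (hm : m ∈ T)
    (hm' : -m ∈ T) : signedOrbit f m ⊆ T :=
  Set.union_subset (cycleOrbit_subset hf hm) (cycleOrbit_subset hf hm')

theorem mem_stabilizer_union {T U : Set ℤ} (hT : f ∈ MulAction.stabilizer (Perm ℤ) T)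
    (hU : f ∈ MulAction.stabilizer (Perm ℤ) U) : f ∈ MulAction.stabilizer (Perm ℤ) (T ∪ U) :=
  MulAction.mem_stabilizer_set.2 fun x =>
    or_congr (MulAction.mem_stabilizer_set.1 hT x) (MulAction.mem_stabilizer_set.1 hU x)

theorem signedOrbit_signedSwap_mul (hf : f ∈ BInfSet) (hm : m ≠ 0) (hn : n ≠ 0)
    (hfn : f n = n) : signedOrbit (signedSwap m n * f) m = signedOrbit f m ∪ {n, -n} := by
  have hgn := signedSwap_mul_apply hm hn hfn
  have hg := signedSwap_mul_mem_BInfSet hf hm hn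
  apply Set.Subset.antisymm
  · set T := signedOrbit f m ∪ {n, -n}
    have hmT : m ∈ T := Or.inl (self_mem_signedOrbit f m)
    have hmT' : -m ∈ T := Or.inl (neg_mem_signedOrbit f m)
    have hpair : f ∈ MulAction.stabilizer (Perm ℤ) ({n, -n} : Set ℤ) :=
      mem_stabilizer_of_fixes (by simp [hfn, apply_neg_of_fixed hf hfn])
    have ht := signedSwap_mem_stabilizer (n := n)
      (iff_of_true hmT (Or.inr (by simp))) (iff_of_true hmT' (Or.inr (by simp)))
    exact signedOrbit_subset
      (mul_mem ht (mem_stabilizer_union (mem_stabilizer_signedOrbit f m) hpair)) hmT hmT'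
  · have hgT := mem_stabilizer_signedOrbit (signedSwap m n * f) m
    set T := signedOrbit (signedSwap m n * f) m
    have hmT : m ∈ T := self_mem_signedOrbit _ m
    have hmT' : -m ∈ T := neg_mem_signedOrbit _ m
    have hnT : n ∈ T := (MulAction.mem_stabilizer_set.1 hgT n).1 (by rwa [Perm.smul_def, hgn])
    have hnT' : -n ∈ T :=
      (MulAction.mem_stabilizer_set.1 hgT (-n)).1 (by rwa [Perm.smul_def, hg.1, hgn])
    have hfT : f ∈ MulAction.stabilizer (Perm ℤ) T := (Subgroup.mul_mem_cancel_left _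
      (signedSwap_mem_stabilizer (iff_of_true hmT hnT) (iff_of_true hmT' hnT'))).1 hgT
    exact Set.union_subset (signedOrbit_subset hfT hmT hmT') (Set.pair_subset hnT hnT')

theorem eq_of_mem_cycleOrbit_of_fixed (hfn : f n = n) (h : n ∈ cycleOrbit f m) : m = n :=
  (cycleOrbit_of_fixed hfn).subset (SameCycle.symm h)

theorem not_sameCycle_neg_of_fixed (hm : m ≠ 0) (hfm : f m = m) : ¬f.SameCycle m (-m) := fun h => by
  have hneg : -m = m := (cycleOrbit_of_fixed hfm).subset h
  exact hm (self_eq_neg.1 hneg.symm)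

theorem sameCycle_neg_of_signedSwap_mul (hf : f ∈ BInfSet) (hn : n ≠ 0)
    (hfn : f n = n) (hmn' : m ≠ -n) (h : (signedSwap m n * f).SameCycle m (-m)) :
    f.SameCycle m (-m) := by
  by_contra hnot
  have hmT : m ∈ cycleOrbit f m ∪ {n} := Or.inl (self_mem_cycleOrbit f m)
  have hmT' : -m ∉ cycleOrbit f m ∪ {n} := by
    rintro (h' | h')
    · exact hnot h'
    · exact hmn' (by rw [← h', neg_neg])
  have hnT' : -n ∉ cycleOrbit f m ∪ {n} := by
    rintro (h' | h')
    · exact hmn' (eq_of_mem_cycleOrbit_of_fixed (apply_neg_of_fixed hf hfn) h')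
    · have : -n = n := h'
      omega
  have hfn_stab : f ∈ MulAction.stabilizer (Perm ℤ) {n} :=
    mem_stabilizer_of_fixes fun x hx => by rwa [hx]
  exact hmT' (cycleOrbit_subset (mul_mem
    (signedSwap_mem_stabilizer (iff_of_true hmT (Or.inr rfl)) (iff_of_false hmT' hnT'))
    (mem_stabilizer_union (mem_stabilizer_cycleOrbit f m) hfn_stab)) hmT h)

theorem sameCycle_neg_signedSwap_mul (hf : f ∈ BInfSet) (hm : m ≠ 0) (hn : n ≠ 0)
    (hfn : f n = n) (h : f.SameCycle m (-m)) : (signedSwap m n * f).SameCycle m (-m) := by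
  by_contra hnot
  have hnT := sameCycle_signedSwap_mul hm hn hfn
  have hg := signedSwap_mul_mem_BInfSet hf hm hn
  have hgT := mem_stabilizer_cycleOrbit (signedSwap m n * f) m
  set g := signedSwap m n * f
  have hnT' : -n ∉ cycleOrbit g m := fun h' =>
    hnot (SameCycle.trans h' (sameCycle_neg hg hnT).symm)
  have hfT : f ∈ MulAction.stabilizer (Perm ℤ) (cycleOrbit g m) :=
    (Subgroup.mul_mem_cancel_left _ (signedSwap_mem_stabilizer
      (iff_of_true (self_mem_cycleOrbit g m) hnT) (iff_of_false hnot hnT'))).1 hgT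
  exact hnot (cycleOrbit_subset hfT (self_mem_cycleOrbit g m) h)

theorem expPlus_signedSwap_mul (hf : f ∈ BInfSet) (hm : m ≠ 0) (hn : n ≠ 0) (hfn : f n = n)
    (hmn : m ≠ n) :
    expPlus (signedSwap m n * f) = expPlus f + if m = -n then 0 else 1 := by
  rw [expPlus_eq_add_signedOrbit (signedSwap_mul_mem_BInfSet hf hm hn) hm,
    expPlus_eq_add_signedOrbit hf hm, cyclesAvoiding_signedSwap_mul hf hm hn hfn,
    signedOrbit_signedSwap_mul hf hm hn hfn]
  have hm_mem := self_mem_signedOrbit f m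
  have hm_mem' := neg_mem_signedOrbit f m
  split_ifs with hmn'
  · subst hmn'
    rw [neg_neg] at hm_mem'
    rw [Set.union_eq_left.2 (Set.pair_subset hm_mem' hm_mem), add_zero]
  have hfin : (signedOrbit f m).Finite := (cycleOrbit_finite hf m).union (cycleOrbit_finite hf (-m))
  have hdisj : Disjoint (signedOrbit f m) {n, -n} := by
    refine Set.disjoint_right.2 ?_
    rintro x (rfl | rfl) (h | h)
    · exact hmn (eq_of_mem_cycleOrbit_of_fixed hfn h)
    · exact hmn' (neg_eq_iff_eq_neg.1 (eq_of_mem_cycleOrbit_of_fixed hfn h))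
    · exact hmn' (eq_of_mem_cycleOrbit_of_fixed (apply_neg_of_fixed hf hfn) h)
    · exact hmn (neg_injective (eq_of_mem_cycleOrbit_of_fixed (apply_neg_of_fixed hf hfn) h))
  have hcard : 2 ≤ (signedOrbit f m).ncard := by
    rw [← Set.ncard_pair (show m ≠ -m by omega)]
    exact Set.ncard_le_ncard (Set.pair_subset hm_mem hm_mem') hfin
  rw [Set.ncard_union_eq hdisj hfin, Set.ncard_pair (by omega)]
  omega

theorem negCount_signedSwap_mul (hf : f ∈ BInfSet) (hm : m ≠ 0) (hn : n ≠ 0) (hfn : f n = n) :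
    negCount (signedSwap m n * f) = negCount f + if m = -n then 1 else 0 := by
  classical
  rw [negCount_eq_add_ite (signedSwap_mul_mem_BInfSet hf hm hn) hm, negCount_eq_add_ite hf hm,
    cyclesAvoiding_signedSwap_mul hf hm hn hfn]
  by_cases hmn' : m = -n
  · have hgn : (signedSwap m n * f).SameCycle m (-m) := by
      rw [hmn', neg_neg, ← hmn']
      exact sameCycle_signedSwap_mul hm hn hfn
    have hfm : f m = m := hmn' ▸ apply_neg_of_fixed hf hfn
    rw [if_pos hgn, if_neg (not_sameCycle_neg_of_fixed hm hfm), if_pos hmn']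
  · simp only [if_neg hmn', add_zero, iff_def.2 ⟨sameCycle_neg_of_signedSwap_mul hf hn hfn hmn',
      sameCycle_neg_signedSwap_mul hf hm hn hfn⟩]

theorem phi_signedSwap_mul (qp qm : ℂ) (hf : f ∈ BInfSet) (hm : m ≠ 0) (hn : n ≠ 0)
    (hfn : f n = n) :
    phi qp qm (signedSwap m n * f) = reflectionWeight qp qm m n * phi qp qm f := by
  unfold reflectionWeight
  split_ifs with hmn hmn'
  · rw [hmn, signedSwap_self, one_mul, one_mul]
  all_goals
    rw [phi, phi, expPlus_signedSwap_mul hf hm hn hfn hmn, negCount_signedSwap_mul hf hm hn hfn]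
    simp only [hmn', if_true, if_false]
    ring

end ReflectionFactorization

section FiniteHyperoctahedralGroups

variable {L N : ℕ} {g : Perm ℤ} {i m n : ℤ}

/-- The set `{±1, …, ±L}` on which the hyperoctahedral group of rank `L` acts. -/
def window (L : ℕ) : Finset ℤ := (Finset.Icc (-(L : ℤ)) L).erase 0

theorem mem_window : i ∈ window L ↔ i ≠ 0 ∧ i.natAbs ≤ L := by
  simp only [window, Finset.mem_erase, Finset.mem_Icc]
  omega

theorem ne_zero_of_mem_window (h : i ∈ window L) : i ≠ 0 := (mem_window.1 h).1

theorem neg_mem_window : -i ∈ window L ↔ i ∈ window L := by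
  simp [mem_window]

instance (L : ℕ) : InvolutiveNeg (window L) where
  neg i := ⟨-i, neg_mem_window.2 i.2⟩
  neg_neg i := Subtype.ext (neg_neg (i : ℤ))

theorem coe_neg_window (i : window L) : ((-i : window L) : ℤ) = -i := rfl

theorem neg_ne_self_of_window (i : window L) : -i ≠ i := fun h =>
  ne_zero_of_mem_window i.2 (neg_eq_self.1 (congrArg Subtype.val h))

theorem natCast_mem_window (N : ℕ) : ((N + 1 : ℕ) : ℤ) ∈ window (N + 1) :=
  mem_window.2 (by omega)

theorem natCast_succ_notMem_window (N : ℕ) : ((N + 1 : ℕ) : ℤ) ∉ window N := by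
  rw [mem_window]
  omega

theorem window_mono (h : N ≤ L) : window N ⊆ window L := fun i => by
  simp only [mem_window]
  omega

/-- The hyperoctahedral group of rank `L`, as the subgroup of `BInfSet` supported on
`window L`. -/
def hyperoctahedral (L : ℕ) : Subgroup (Perm ℤ) where
  carrier := {g | (∀ i, g (-i) = -g i) ∧ ∀ i ∉ window L, g i = i}
  one_mem' := ⟨fun _ => rfl, fun _ _ => rfl⟩
  mul_mem' {g h} hg hh :=
    ⟨fun i => by rw [Perm.mul_apply, hh.1, hg.1, Perm.mul_apply],
      fun i hi => by rw [Perm.mul_apply, hh.2 i hi, hg.2 i hi]⟩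
  inv_mem' {g} hg :=
    ⟨fun i => by rw [Perm.inv_eq_iff_eq, hg.1, Perm.inv_def, apply_symm_apply],
      fun i hi => by rw [Perm.inv_eq_iff_eq, hg.2 i hi]⟩

theorem apply_mem_window (hg : g ∈ hyperoctahedral L) : g i ∈ window L ↔ i ∈ window L := by
  refine not_iff_not.1 ⟨fun h => ?_, fun h => ?_⟩
  · rwa [g.injective (hg.2 _ h)] at h
  · rwa [hg.2 i h]

theorem hyperoctahedral_mono (h : N ≤ L) : hyperoctahedral N ≤ hyperoctahedral L :=
  fun _ hg => ⟨hg.1, fun i hi => hg.2 i fun hN => hi (window_mono h hN)⟩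

theorem hyperoctahedral_subset_BInfSet (L : ℕ) : (hyperoctahedral L : Set (Perm ℤ)) ⊆ BInfSet :=
  fun _ hg => ⟨hg.1, (window L).finite_toSet.subset fun i hi => not_not.1 (mt (hg.2 i) hi)⟩

theorem exists_mem_hyperoctahedral (hg : g ∈ BInfSet) : ∃ L, g ∈ hyperoctahedral L := by
  obtain ⟨L, hL⟩ := (hg.2.image Int.natAbs).bddAbove
  refine ⟨L, hg.1, fun i hi => ?_⟩
  by_contra h
  have hi0 : i ≠ 0 := by
    rintro rfl
    exact h (self_eq_neg.1 (by simpa using hg.1 0))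
  exact hi (mem_window.2 ⟨hi0, hL ⟨i, h, rfl⟩⟩)

theorem signedSwap_mem_hyperoctahedral (hm : m ∈ window L) (hn : n ∈ window L) :
    signedSwap m n ∈ hyperoctahedral L := by
  refine ⟨signedSwap_apply_neg (ne_zero_of_mem_window hm) (ne_zero_of_mem_window hn),
    fun i hi => ?_⟩
  apply signedSwap_apply_of_ne <;> rintro rfl <;> simp_all [neg_mem_window]

theorem mem_hyperoctahedral_of_fixed (hg : g ∈ hyperoctahedral (N + 1))
    (h : g (N + 1 : ℕ) = (N + 1 : ℕ)) : g ∈ hyperoctahedral N := by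
  refine ⟨hg.1, fun i hi => ?_⟩
  by_cases hi' : i ∈ window (N + 1)
  · have : i = (N + 1 : ℕ) ∨ i = -(N + 1 : ℕ) := by
      rw [mem_window] at hi hi'
      omega
    rcases this with rfl | rfl
    · exact h
    · rw [hg.1, h]
  · exact hg.2 i hi'

theorem hyperoctahedral_zero : hyperoctahedral 0 = ⊥ :=
  (Subgroup.eq_bot_iff_forall _).2 fun _ hg => Equiv.ext fun i => hg.2 i (by simp [window])

theorem exists_eq_signedSwap_mul (hg : g ∈ hyperoctahedral (N + 1)) :
    ∃ m ∈ window (N + 1), ∃ h ∈ hyperoctahedral N, signedSwap m (N + 1 : ℕ) * h = g := by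
  have hN := natCast_mem_window N
  have hm := (apply_mem_window hg).2 hN
  have ht := signedSwap_mul_self (ne_zero_of_mem_window hm) (ne_zero_of_mem_window hN)
  refine ⟨_, hm, signedSwap (g (N + 1 : ℕ)) (N + 1 : ℕ) * g, mem_hyperoctahedral_of_fixed
    (mul_mem (signedSwap_mem_hyperoctahedral hm hN) hg) ?_, ?_⟩
  · exact signedSwap_apply_left (ne_zero_of_mem_window hm) (ne_zero_of_mem_window hN)
  · rw [← mul_assoc, ht, one_mul]

/-- A signed permutation of rank `N + 1` is one of rank `N` followed by a reflection, which records
the image of `N + 1`. -/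
def hyperoctahedralSuccEquiv (N : ℕ) :
    window (N + 1) × hyperoctahedral N ≃ hyperoctahedral (N + 1) :=
  Equiv.ofBijective
    (fun p => ⟨signedSwap p.1 (N + 1 : ℕ) * p.2,
      mul_mem (signedSwap_mem_hyperoctahedral p.1.2 (natCast_mem_window N))
        (hyperoctahedral_mono N.le_succ p.2.2)⟩) <| by
    have happly (p : window (N + 1) × hyperoctahedral N) :
        (signedSwap p.1 (N + 1 : ℕ) * (p.2 : Perm ℤ)) (N + 1 : ℕ) = p.1 :=
      signedSwap_mul_apply (ne_zero_of_mem_window p.1.2)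
        (ne_zero_of_mem_window (natCast_mem_window N)) (p.2.2.2 _ (natCast_succ_notMem_window N))
    constructor
    · intro p p' h
      have hmul := congrArg Subtype.val h
      have hfst : p.1 = p'.1 := Subtype.ext <|
        (happly p).symm.trans ((congrArg (fun σ : Perm ℤ => σ (N + 1 : ℕ)) hmul).trans (happly p'))
      refine Prod.ext hfst (Subtype.ext ?_)
      dsimp only at hmul
      rw [hfst] at hmul
      exact mul_left_cancel hmul
    · rintro ⟨g, hg⟩
      obtain ⟨m, hm, h, hh, rfl⟩ := exists_eq_signedSwap_mul hg
      exact ⟨⟨⟨m, hm⟩, ⟨h, hh⟩⟩, rfl⟩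

instance finite_hyperoctahedral (N : ℕ) : Finite (hyperoctahedral N) := by
  induction N with
  | zero =>
    rw [hyperoctahedral_zero]
    infer_instance
  | succ N ih => exact Finite.of_equiv _ (hyperoctahedralSuccEquiv N)

instance fintypeHyperoctahedral (N : ℕ) : Fintype (hyperoctahedral N) := Fintype.ofFinite _

theorem sum_hyperoctahedral_succ {A : Type*} [AddCommMonoid A] (F : Perm ℤ → A) (N : ℕ) :
    ∑ g : hyperoctahedral (N + 1), F g = ∑ m ∈ window (N + 1), ∑ g : hyperoctahedral N,
      F (signedSwap m (N + 1 : ℕ) * g) := by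
  rw [← Equiv.sum_comp (hyperoctahedralSuccEquiv N), Fintype.sum_prod_type]
  exact Finset.sum_coe_sort (window (N + 1)) fun m => ∑ g : hyperoctahedral N,
    F (signedSwap m (N + 1 : ℕ) * g)

end FiniteHyperoctahedralGroups

section ReflectionCocycle

variable {L : ℕ}

/-- `signedSwap m n` as an element of the hyperoctahedral group. -/
def reflection (m n : window L) : hyperoctahedral L :=
  ⟨signedSwap m n, signedSwap_mem_hyperoctahedral m.2 n.2⟩

theorem phi_one (qp qm : ℂ) : phi qp qm 1 = 1 := by
  have h : ntOrbits (1 : Perm ℤ) = ∅ :=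
    Set.eq_empty_iff_forall_notMem.2 fun _ ⟨i, hi, _⟩ => hi rfl
  simp [phi, expPlus, negCount, posOrbits, negOrbits, h]

theorem phi_mul (a b qp qm : ℂ) (σ : Perm ℤ) :
    phi (a * qp) (b * qm) σ = phi a b σ * phi qp qm σ := by
  simp only [phi, mul_pow]
  ring

theorem eq_phi_mul_of_reflection_mul {qp qm : ℂ} {F : hyperoctahedral L → ℂ}
    (hF : ∀ (m n : window L) (f : hyperoctahedral L), (f : Perm ℤ) n = n →
      F (reflection m n * f) = reflectionWeight qp qm m n * F f) (g : hyperoctahedral L) :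
    F g = phi qp qm g * F 1 := by
  suffices key : ∀ N ≤ L, ∀ g : hyperoctahedral L, (g : Perm ℤ) ∈ hyperoctahedral N →
      F g = phi qp qm g * F 1 from key L le_rfl g g.2
  intro N
  induction N with
  | zero =>
    intro _ g hg
    rw [hyperoctahedral_zero, Subgroup.mem_bot] at hg
    rw [hg, Subtype.ext (a1 := g) (a2 := 1) hg, phi_one, one_mul]
  | succ N ih =>
    rintro hNL ⟨_, hgL⟩ hg
    obtain ⟨m, hm, h, hh, rfl⟩ := exists_eq_signedSwap_mul hg
    have hN := natCast_mem_window N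
    have hfix := hh.2 _ (natCast_succ_notMem_window N)
    rw [phi_signedSwap_mul qp qm (hyperoctahedral_subset_BInfSet _ hh) (ne_zero_of_mem_window hm)
      (ne_zero_of_mem_window hN) hfix, mul_assoc,
      ← ih (N.le_succ.trans hNL) ⟨h, hyperoctahedral_mono (N.le_succ.trans hNL) hh⟩ hh]
    exact hF ⟨m, window_mono hNL hm⟩ ⟨_, window_mono hNL hN⟩ ⟨h, _⟩ hfix

theorem sum_reflectionWeight (qp qm : ℂ) (N : ℕ) :
    ∑ m ∈ window (N + 1), reflectionWeight qp qm m (N + 1 : ℕ) = 1 + qm + 2 * N * qp := by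
  have hpos := natCast_mem_window N
  have hneg : -((N + 1 : ℕ) : ℤ) ∈ (window (N + 1)).erase (N + 1 : ℕ) :=
    Finset.mem_erase.2 ⟨by omega, neg_mem_window.2 hpos⟩
  have hrest : ∀ m ∈ ((window (N + 1)).erase (N + 1 : ℕ)).erase (-(N + 1 : ℕ)),
      reflectionWeight qp qm m (N + 1 : ℕ) = qp := fun m hm => by
    rw [Finset.mem_erase, Finset.mem_erase] at hm
    rw [reflectionWeight, if_neg hm.2.1, if_neg hm.1]
  have hcard : (((window (N + 1)).erase (N + 1 : ℕ)).erase (-(N + 1 : ℕ))).card = 2 * N := by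
    rw [Finset.card_erase_of_mem hneg, Finset.card_erase_of_mem hpos, window,
      Finset.card_erase_of_mem (by rw [Finset.mem_Icc]; omega), Int.card_Icc]
    omega
  rw [← Finset.add_sum_erase _ _ hpos, ← Finset.add_sum_erase _ _ hneg,
    Finset.sum_congr rfl hrest, Finset.sum_const, hcard, reflectionWeight, if_pos rfl,
    reflectionWeight, if_neg (by omega), if_pos rfl, nsmul_eq_mul]
  push_cast
  ring

theorem sum_phi_hyperoctahedral (qp qm : ℂ) (N : ℕ) :
    ∑ g : hyperoctahedral N, phi qp qm g = ∏ j ∈ Finset.range N, (1 + qm + 2 * j * qp) := by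
  induction N with
  | zero =>
    have h (g : hyperoctahedral 0) : (g : Perm ℤ) = 1 :=
      Subgroup.mem_bot.1 (hyperoctahedral_zero ▸ g.2)
    have : Unique (hyperoctahedral 0) := ⟨⟨1⟩, fun g => Subtype.ext (h g)⟩
    rw [Fintype.sum_unique, h, phi_one, Finset.prod_range_zero]
  | succ N ih =>
    rw [sum_hyperoctahedral_succ, Finset.prod_range_succ, ← ih, ← sum_reflectionWeight, mul_comm,
      Finset.sum_mul_sum]
    refine Finset.sum_congr rfl fun m hm => Finset.sum_congr rfl fun g _ => ?_
    exact phi_signedSwap_mul qp qm (hyperoctahedral_subset_BInfSet _ g.2)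
      (ne_zero_of_mem_window hm) (ne_zero_of_mem_window (natCast_mem_window N))
      (g.2.2 _ (natCast_succ_notMem_window N))

end ReflectionCocycle

section SignCharacters

variable {L : ℕ}

/-- The action of the hyperoctahedral group on `{±1, …, ±L}`. -/
def windowPerm (L : ℕ) : hyperoctahedral L →* Perm (window L) :=
  MonoidHom.toHomPerm
    { toFun := fun g x => ⟨(g : Perm ℤ) x, (apply_mem_window g.2).2 x.2⟩
      map_one' := rfl
      map_mul' := fun _ _ => rfl }

theorem natAbs_apply_natAbs {g : Perm ℤ} (hg : g ∈ hyperoctahedral L) (i : ℤ) :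
    (g i.natAbs).natAbs = (g i).natAbs := by
  rcases Int.natAbs_eq i with h | h
  · rw [← h]
  · rw [h, hg.1, Int.natAbs_neg, Int.natAbs_neg, Int.natAbs_natCast]

theorem natAbs_apply_lt {g : Perm ℤ} (hg : g ∈ hyperoctahedral L) {i : ℤ}
    (hi : i.natAbs < L + 1) : (g i).natAbs < L + 1 := by
  by_cases h : i ∈ window L
  · exact Nat.lt_succ_iff.2 (mem_window.1 ((apply_mem_window hg).2 h)).2
  · rwa [hg.2 i h]

/-- The action of the hyperoctahedral group on absolute values; it is taken on `{0, …, L}`, where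
`0` is fixed. -/
def absPerm (L : ℕ) : hyperoctahedral L →* Perm (Fin (L + 1)) :=
  MonoidHom.toHomPerm
    { toFun := fun g k => ⟨((g : Perm ℤ) (k : ℕ)).natAbs, natAbs_apply_lt g.2 k.2⟩
      map_one' := rfl
      map_mul' := fun g h => funext fun k =>
        Fin.ext (natAbs_apply_natAbs g.2 ((h : Perm ℤ) (k : ℕ))).symm }

theorem reflection_self (m : window L) : reflection m m = 1 := Subtype.ext (signedSwap_self m)

theorem windowPerm_reflection_of_eq_neg {m n : window L} (h : m = -n) :
    windowPerm L (reflection m n) = swap m n := by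
  ext x
  have h' : (m : ℤ) = -n := congrArg Subtype.val h
  change signedSwap m n x = _
  simp only [signedSwap, if_pos h', swap_apply_def, Subtype.ext_iff]
  split_ifs <;> rfl

theorem windowPerm_reflection_of_ne_neg {m n : window L} (h : m ≠ -n) :
    windowPerm L (reflection m n) = swap (-m) (-n) * swap m n := by
  ext x
  have h' : (m : ℤ) ≠ -n := Subtype.coe_ne_coe.2 h
  change signedSwap m n x = _
  simp only [signedSwap, if_neg h', Perm.mul_apply, swap_apply_def, Subtype.ext_iff,
    coe_neg_window]
  split_ifs <;> rfl

theorem absPerm_reflection_of_eq_neg {m n : window L} (h : m = -n) :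
    absPerm L (reflection m n) = 1 := by
  ext k
  have h' : (m : ℤ) = -n := congrArg Subtype.val h
  change (signedSwap m n (k : ℕ)).natAbs = k
  simp only [signedSwap, if_pos h', swap_apply_def]
  grind

theorem absPerm_reflection_of_ne_neg {m n : window L} (h : m ≠ -n) :
    absPerm L (reflection m n) =
      swap ⟨(m : ℤ).natAbs, Nat.lt_succ_iff.2 (mem_window.1 m.2).2⟩
        ⟨(n : ℤ).natAbs, Nat.lt_succ_iff.2 (mem_window.1 n.2).2⟩ := by
  ext k
  have hm := ne_zero_of_mem_window m.2
  have hn := ne_zero_of_mem_window n.2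
  have h' : (m : ℤ) ≠ -n := Subtype.coe_ne_coe.2 h
  change (signedSwap m n (k : ℕ)).natAbs = _
  simp only [signedSwap, if_neg h', Perm.mul_apply, swap_apply_def, Fin.ext_iff]
  grind

theorem reflectionWeight_coe (qp qm : ℂ) (m n : window L) :
    reflectionWeight qp qm m n = if m = n then 1 else if m = -n then qm else qp := by
  simp only [reflectionWeight, Subtype.ext_iff, coe_neg_window]

theorem sign_windowPerm_reflection (m n : window L) :
    ((sign (windowPerm L (reflection m n)) : ℤ) : ℂ) = reflectionWeight 1 (-1) m n := by
  rw [reflectionWeight_coe]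
  split_ifs with hmn h
  · rw [hmn, reflection_self, map_one, map_one, Units.val_one, Int.cast_one]
  · rw [windowPerm_reflection_of_eq_neg h, sign_swap hmn]
    norm_num
  · rw [windowPerm_reflection_of_ne_neg h, map_mul, sign_swap hmn, sign_swap (neg_injective.ne hmn)]
    norm_num

theorem sign_absPerm_reflection (m n : window L) :
    ((sign (absPerm L (reflection m n)) : ℤ) : ℂ) = reflectionWeight (-1) 1 m n := by
  rw [reflectionWeight_coe]
  split_ifs with hmn h
  · rw [hmn, reflection_self, map_one, map_one, Units.val_one, Int.cast_one]
  · rw [absPerm_reflection_of_eq_neg h, map_one, Units.val_one, Int.cast_one]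
  · have habs : (m : ℤ).natAbs ≠ (n : ℤ).natAbs := fun he =>
      (Int.natAbs_eq_natAbs_iff.1 he).elim (fun e => hmn (Subtype.ext e))
        fun e => h (Subtype.ext e)
    rw [absPerm_reflection_of_ne_neg h, sign_swap (by rwa [Ne, Fin.mk.injEq])]
    norm_num

theorem phi_eq_of_character {a b : ℂ} (χ : hyperoctahedral L →* ℤˣ)
    (hχ : ∀ m n : window L, ((χ (reflection m n) : ℤ) : ℂ) = reflectionWeight a b m n)
    (g : hyperoctahedral L) : phi a b g = ((χ g : ℤ) : ℂ) := by
  have h := eq_phi_mul_of_reflection_mul (F := fun g => ((χ g : ℤ) : ℂ)) (qp := a) (qm := b)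
    (fun m n f _ => by rw [← hχ, map_mul, Units.val_mul, Int.cast_mul]) g
  simpa using h.symm

theorem isPosDefOn_BInfSet_of_hyperoctahedral {f : Perm ℤ → ℂ}
    (h : ∀ L, IsPosDefOn (hyperoctahedral L : Set (Perm ℤ)) f) : IsPosDefOn BInfSet f := by
  intro k g hg z
  choose N hN using fun i => exists_mem_hyperoctahedral (hg i)
  exact h (Finset.univ.sup N) k g
    (fun i => hyperoctahedral_mono (Finset.le_sup (Finset.mem_univ i)) (hN i)) z

theorem isPosDefOn_phi_mul_of_character {a b qp qm : ℂ}
    (χ : ∀ L, hyperoctahedral L →* ℤˣ)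
    (hχ : ∀ L, ∀ m n : window L, ((χ L (reflection m n) : ℤ) : ℂ) = reflectionWeight a b m n)
    (h : IsPosDefOn BInfSet (phi qp qm)) : IsPosDefOn BInfSet (phi (a * qp) (b * qm)) :=
  isPosDefOn_BInfSet_of_hyperoctahedral fun L => isPosDefOn_univ_coe_iff.1 <| by
    simp only [phi_mul, phi_eq_of_character (χ L) (hχ L)]
    exact (isPosDefOn_univ_coe_iff.2
      (h.mono (hyperoctahedral_subset_BInfSet L))).character_mul (χ L)

theorem isPosDefOn_phi_neg_left {qp qm : ℂ} (h : IsPosDefOn BInfSet (phi qp qm)) :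
    IsPosDefOn BInfSet (phi (-qp) qm) := by
  simpa using isPosDefOn_phi_mul_of_character (fun L => sign.comp (absPerm L))
    (fun _ => sign_absPerm_reflection) h

theorem isPosDefOn_phi_neg_right {qp qm : ℂ} (h : IsPosDefOn BInfSet (phi qp qm)) :
    IsPosDefOn BInfSet (phi qp (-qm)) := by
  simpa using isPosDefOn_phi_mul_of_character (fun L => sign.comp (windowPerm L))
    (fun _ => sign_windowPerm_reflection) h

end SignCharacters

section NecessaryConditions

variable {qp qm : ℂ} {q r : ℝ}

theorem prod_nonneg_of_isPosDefOn_phi (h : IsPosDefOn BInfSet (phi qp qm)) (N : ℕ) :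
    0 ≤ ∏ j ∈ Finset.range N, (1 + qm + 2 * j * qp) := by
  rw [← sum_phi_hyperoctahedral]
  exact (isPosDefOn_univ_coe_iff.2 (h.mono (hyperoctahedral_subset_BInfSet N))).sum_univ_nonneg

theorem exists_ofReal_eq_right_of_isPosDefOn_phi (h : IsPosDefOn BInfSet (phi qp qm)) :
    ∃ r : ℝ, qm = r ∧ -1 ≤ r ∧ r ≤ 1 := by
  have hadd : 0 ≤ 1 + qm := by simpa using prod_nonneg_of_isPosDefOn_phi h 1
  have hsub : 0 ≤ 1 + -qm := by
    simpa using prod_nonneg_of_isPosDefOn_phi (isPosDefOn_phi_neg_right h) 1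
  obtain ⟨s, hs, hs'⟩ := RCLike.nonneg_iff_exists_ofReal.1 hadd
  obtain rfl : qm = (s - 1 : ℝ) := by
    rw [Complex.ofReal_sub, Complex.ofReal_one]
    exact eq_sub_of_add_eq' hs'.symm
  norm_cast at hsub
  exact ⟨s - 1, rfl, by linarith, by linarith⟩

theorem exists_ofReal_eq_left_of_isPosDefOn_phi (h : IsPosDefOn BInfSet (phi qp r)) :
    ∃ q : ℝ, qp = q := by
  have hadd := prod_nonneg_of_isPosDefOn_phi h 2
  have hsub := prod_nonneg_of_isPosDefOn_phi (isPosDefOn_phi_neg_right h) 2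
  have hsum : 0 ≤ ((2 + 2 * r ^ 2 : ℝ) : ℂ) + (4 : ℝ) * qp := by
    refine (add_nonneg hadd hsub).trans_eq ?_
    simp only [Finset.prod_range_succ, Finset.prod_range_zero]
    push_cast
    ring
  have him := (Complex.le_def.1 hsum).2
  rw [Complex.add_im, Complex.ofReal_im, Complex.im_ofReal_mul, Complex.zero_im, zero_add] at him
  refine ⟨qp.re, Complex.ext rfl ?_⟩
  rw [Complex.ofReal_im]
  linarith

theorem exists_eq_natCast_mul_of_prod_nonneg {K : Type*} [Field K] [LinearOrder K]
    [IsStrictOrderedRing K] [Archimedean K] {x y : K} (hy : 0 < y)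
    (h : ∀ N : ℕ, 0 ≤ ∏ j ∈ Finset.range N, (x - j * y)) : ∃ M : ℕ, x = M * y := by
  by_contra! hne
  have hex : ∃ M : ℕ, x < M * y := by
    simpa using exists_lt_nsmul hy x
  have hpos : 0 < ∏ j ∈ Finset.range (Nat.find hex), (x - j * y) :=
    Finset.prod_pos fun j hj => sub_pos.2 <|
      (not_lt.1 (Nat.find_min hex (Finset.mem_range.1 hj))).lt_of_ne' (hne j)
  have hneg := mul_neg_of_pos_of_neg hpos (sub_neg.2 (Nat.find_spec hex))
  rw [← Finset.prod_range_succ] at hneg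
  exact (h _).not_gt hneg

theorem exists_one_add_eq_of_isPosDefOn_phi (hq : 0 < q) (h : IsPosDefOn BInfSet (phi q r)) :
    ∃ M : ℕ, 1 + r = M * (2 * q) := by
  refine exists_eq_natCast_mul_of_prod_nonneg (by positivity) fun N => ?_
  have hN := prod_nonneg_of_isPosDefOn_phi (isPosDefOn_phi_neg_left h) N
  rw [← Complex.zero_le_real]
  refine hN.trans_eq ?_
  push_cast
  exact Finset.prod_congr rfl fun j _ => by ring

theorem exists_nat_of_isPosDefOn_phi (hq : 0 < q) (h : IsPosDefOn BInfSet (phi q r)) :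
    ∃ M N : ℕ, M + N ≠ 0 ∧ (q : ℂ) = 1 / (M + N) ∧ (r : ℂ) = (M - N) / (M + N) := by
  obtain ⟨M, hM⟩ := exists_one_add_eq_of_isPosDefOn_phi hq h
  obtain ⟨N, hN⟩ := exists_one_add_eq_of_isPosDefOn_phi (r := -r) hq
    (by simpa using isPosDefOn_phi_neg_right h)
  have hmul : q * (M + N) = 1 := by linarith
  have hne : (M + N : ℝ) ≠ 0 := right_ne_zero_of_mul_eq_one hmul
  have hq' : q = 1 / (M + N) := eq_div_of_mul_eq hne hmul
  have hr' : r = (M - N) / (M + N) := eq_div_of_mul_eq hne <| by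
    linear_combination (M + N : ℝ) / 2 * (hM - hN) + (M - N) * hmul
  exact ⟨M, N, by exact_mod_cast hne, by simp [hq'], by simp [hr']⟩

theorem exists_params_of_isPosDefOn_phi (h : IsPosDefOn BInfSet (phi qp qm)) :
    (∃ (M N : ℕ) (ε : ℤ), (ε = 1 ∨ ε = -1) ∧ M + N ≠ 0 ∧
        qp = (ε : ℂ) / ((M : ℂ) + (N : ℂ)) ∧
        qm = ((M : ℂ) - (N : ℂ)) / ((M : ℂ) + (N : ℂ))) ∨
      (qp = 0 ∧ ∃ r : ℝ, qm = (r : ℂ) ∧ -1 ≤ r ∧ r ≤ 1) := by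
  obtain ⟨r, rfl, hr⟩ := exists_ofReal_eq_right_of_isPosDefOn_phi h
  obtain ⟨q, rfl⟩ := exists_ofReal_eq_left_of_isPosDefOn_phi h
  rcases lt_trichotomy q 0 with hq | rfl | hq
  · obtain ⟨M, N, hMN, hq', hr'⟩ := exists_nat_of_isPosDefOn_phi (q := -q) (neg_pos.2 hq)
      (by simpa using isPosDefOn_phi_neg_left h)
    refine Or.inl ⟨M, N, -1, Or.inr rfl, hMN, ?_, hr'⟩
    rw [Int.cast_neg, Int.cast_one, neg_div, ← hq', Complex.ofReal_neg, neg_neg]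
  · exact Or.inr ⟨Complex.ofReal_zero, r, rfl, hr⟩
  · obtain ⟨M, N, hMN, hq', hr'⟩ := exists_nat_of_isPosDefOn_phi hq h
    exact Or.inl ⟨M, N, 1, Or.inl rfl, hMN, by rwa [Int.cast_one], hr'⟩

end NecessaryConditions

section OddColorings

open MulAction

attribute [local instance] arrowAction

variable {L : ℕ} {E : Type*} {τ : E → E} {x : window L → E} {e : E} {i m n : window L}

theorem perm_smul_eq_iff {α : Type*} {g : Perm α} {x : α → E} : g • x = x ↔ ∀ i, x (g i) = x i := by
  rw [smul_eq_iff_eq_inv_smul, eq_comm, funext_iff]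
  refine forall_congr' fun i => ?_
  change x (g⁻¹⁻¹ i) = x i ↔ _
  rw [inv_inv]

theorem swap_mem_stabilizer_of_eq {α : Type*} [DecidableEq α] {x : α → E} {i j : α}
    (h : x i = x j) : swap i j ∈ stabilizer (Perm α) x := by
  rw [mem_stabilizer_iff, perm_smul_eq_iff]
  intro k
  rw [swap_apply_def]
  split_ifs with hi hj <;> simp [*]

theorem windowPerm_reflection_mem_stabilizer (hx : ∀ i, x (-i) = τ (x i)) (h : x m = x n) :
    windowPerm L (reflection m n) ∈ stabilizer (Perm (window L)) x := by
  by_cases hmn : m = -n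
  · rw [windowPerm_reflection_of_eq_neg hmn]
    exact swap_mem_stabilizer_of_eq h
  · rw [windowPerm_reflection_of_ne_neg hmn]
    exact mul_mem (swap_mem_stabilizer_of_eq (by rw [hx, hx, h])) (swap_mem_stabilizer_of_eq h)

/-- The colouring `x` with the colour of `n` changed to `e`, and that of `-n` accordingly. -/
def recolor (τ : E → E) (x : window L → E) (n : window L) (e : E) : window L → E :=
  Function.update (Function.update x n e) (-n) (τ e)

theorem recolor_apply_self : recolor τ x n e n = e := by
  rw [recolor, Function.update_of_ne (neg_ne_self_of_window n).symm, Function.update_self]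

theorem recolor_apply_neg_self : recolor τ x n e (-n) = τ e := Function.update_self ..

theorem recolor_apply_of_ne (hi : i ≠ n) (hi' : i ≠ -n) : recolor τ x n e i = x i := by
  rw [recolor, Function.update_of_ne hi', Function.update_of_ne hi]

theorem recolor_neg (hτ : Function.Involutive τ) (hx : ∀ i, x (-i) = τ (x i)) (i : window L) :
    recolor τ x n e (-i) = τ (recolor τ x n e i) := by
  rcases eq_or_ne i n with rfl | hi
  · rw [recolor_apply_neg_self, recolor_apply_self]
  rcases eq_or_ne i (-n) with rfl | hi'
  · rw [neg_neg, recolor_apply_self, recolor_apply_neg_self, hτ e]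
  rw [recolor_apply_of_ne hi hi', recolor_apply_of_ne (neg_eq_iff_eq_neg.not.2 hi')
    (neg_injective.ne hi), hx]

theorem recolor_recolor (hx : ∀ i, x (-i) = τ (x i)) :
    recolor τ (recolor τ x n e) n (x n) = x := by
  funext i
  rcases eq_or_ne i n with rfl | hi
  · rw [recolor_apply_self]
  rcases eq_or_ne i (-n) with rfl | hi'
  · rw [recolor_apply_neg_self, hx]
  rw [recolor_apply_of_ne hi hi', recolor_apply_of_ne hi hi']

variable [Fintype E] [DecidableEq E]

/-- The colourings of `{±1, …, ±L}` which are odd with respect to an involution `τ` of the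
colours. -/
def oddColorings (τ : E → E) (L : ℕ) : Finset (window L → E) := {x | ∀ i, x (-i) = τ (x i)}

/-- The odd colourings fixed by a signed permutation. -/
def fixedColorings (τ : E → E) (g : hyperoctahedral L) : Finset (window L → E) :=
  {x ∈ oddColorings τ L | windowPerm L g • x = x}

theorem mem_oddColorings : x ∈ oddColorings τ L ↔ ∀ i, x (-i) = τ (x i) := by
  simp [oddColorings]

variable {f : hyperoctahedral L}

theorem mem_fixedColorings :
    x ∈ fixedColorings τ f ↔ (∀ i, x (-i) = τ (x i)) ∧ ∀ i, x (windowPerm L f i) = x i := by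
  rw [fixedColorings, Finset.mem_filter, mem_oddColorings, perm_smul_eq_iff]

theorem windowPerm_neg (f : hyperoctahedral L) (i : window L) :
    windowPerm L f (-i) = -windowPerm L f i :=
  Subtype.ext (f.2.1 i)

theorem windowPerm_eq_self_iff : windowPerm L f n = n ↔ (f : Perm ℤ) n = n := Subtype.ext_iff

theorem windowPerm_reflection_right (m n : window L) : windowPerm L (reflection m n) n = m :=
  Subtype.ext (signedSwap_apply_right (ne_zero_of_mem_window m.2) (ne_zero_of_mem_window n.2))

theorem recolor_mem_fixedColorings (hτ : Function.Involutive τ) (hf : windowPerm L f n = n)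
    (hx : x ∈ fixedColorings τ f) (e : E) : recolor τ x n e ∈ fixedColorings τ f := by
  rw [mem_fixedColorings] at hx ⊢
  refine ⟨recolor_neg hτ hx.1, fun i => ?_⟩
  have hf' : windowPerm L f (-n) = -n := by rw [windowPerm_neg, hf]
  rcases eq_or_ne i n with rfl | hi
  · rw [hf]
  rcases eq_or_ne i (-n) with rfl | hi'
  · rw [hf']
  rw [recolor_apply_of_ne hi hi', recolor_apply_of_ne, hx.2]
  · exact fun h => hi ((windowPerm L f).injective (h.trans hf.symm))
  · exact fun h => hi' ((windowPerm L f).injective (h.trans hf'.symm))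

theorem sum_fixedColorings_recolor {A : Type*} [AddCommMonoid A] (hτ : Function.Involutive τ)
    (hf : windowPerm L f n = n) (G : (window L → E) → A) :
    ∑ x ∈ fixedColorings τ f, ∑ e, G (recolor τ x n e) =
      Fintype.card E • ∑ x ∈ fixedColorings τ f, G x := by
  have hconst : Fintype.card E • ∑ x ∈ fixedColorings τ f, G x =
      ∑ x ∈ fixedColorings τ f, ∑ _e : E, G x := by
    rw [Finset.smul_sum]
    exact Finset.sum_congr rfl fun x _ => (Finset.sum_const _).symm
  rw [hconst, ← Finset.sum_product', ← Finset.sum_product']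
  refine Finset.sum_nbij' (fun p => (recolor τ p.1 n p.2, p.1 n))
    (fun p => (recolor τ p.1 n p.2, p.1 n)) ?_ ?_ ?_ ?_ fun _ _ => rfl <;>
    rintro ⟨x, e⟩ hp <;> rw [Finset.mem_product] at *
  · exact ⟨recolor_mem_fixedColorings hτ hf hp.1 e, Finset.mem_univ _⟩
  · exact ⟨recolor_mem_fixedColorings hτ hf hp.1 e, Finset.mem_univ _⟩
  · exact Prod.ext (recolor_recolor (mem_fixedColorings.1 hp.1).1) recolor_apply_self
  · exact Prod.ext (recolor_recolor (mem_fixedColorings.1 hp.1).1) recolor_apply_self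

theorem fixedColorings_reflection_mul (hf : windowPerm L f n = n) :
    fixedColorings τ (reflection m n * f) = {x ∈ fixedColorings τ f | x m = x n} := by
  ext x
  simp only [fixedColorings, Finset.mem_filter, mem_oddColorings, ← mem_stabilizer_iff, map_mul,
    and_assoc]
  refine and_congr_right fun hx => ⟨fun h => ?_, fun ⟨h, hmn⟩ =>
    mul_mem (windowPerm_reflection_mem_stabilizer hx hmn) h⟩
  have hmn : x m = x n := by
    have := perm_smul_eq_iff.1 h n
    rwa [Perm.mul_apply, hf, windowPerm_reflection_right] at this
  exact ⟨(Subgroup.mul_mem_cancel_left _ (windowPerm_reflection_mem_stabilizer hx hmn)).1 h, hmn⟩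

theorem card_mul_card_fixedColorings_reflection_neg_mul (hτ : Function.Involutive τ)
    (hf : windowPerm L f n = n) :
    Fintype.card E * (fixedColorings τ (reflection (-n) n * f)).card =
      (Finset.univ.filter fun e => τ e = e).card * (fixedColorings τ f).card := by
  have hfilter : fixedColorings τ (reflection (-n) n * f) =
      {x ∈ fixedColorings τ f | τ (x n) = x n} := by
    rw [fixedColorings_reflection_mul hf]
    exact Finset.filter_congr fun x hx => by rw [(mem_fixedColorings.1 hx).1]
  rw [hfilter, Finset.card_filter, ← smul_eq_mul, ← sum_fixedColorings_recolor hτ hf, mul_comm]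
  simp only [recolor_apply_self, ← Finset.card_filter, Finset.sum_const, smul_eq_mul]

theorem card_mul_card_fixedColorings_reflection_mul (hτ : Function.Involutive τ)
    (hf : windowPerm L f n = n) (hmn : m ≠ n) (hmn' : m ≠ -n) :
    Fintype.card E * (fixedColorings τ (reflection m n * f)).card =
      (fixedColorings τ f).card := by
  rw [fixedColorings_reflection_mul hf, Finset.card_filter, ← smul_eq_mul,
    ← sum_fixedColorings_recolor hτ hf]
  simp [recolor_apply_self, recolor_apply_of_ne hmn hmn']

theorem card_fixedColorings_eq [Nonempty E] (hτ : Function.Involutive τ) (g : hyperoctahedral L) :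
    ((fixedColorings τ g).card : ℂ) =
      phi (1 / Fintype.card E) ((Finset.univ.filter fun e => τ e = e).card / Fintype.card E) g *
        (fixedColorings τ (1 : hyperoctahedral L)).card := by
  have hE : (Fintype.card E : ℂ) ≠ 0 := Nat.cast_ne_zero.2 Fintype.card_ne_zero
  refine eq_phi_mul_of_reflection_mul (F := fun g => ((fixedColorings τ g).card : ℂ))
    (fun m n f hfn => ?_) g
  have hf := windowPerm_eq_self_iff.2 hfn
  rw [reflectionWeight_coe]
  split_ifs with hmn hmn'
  · rw [hmn, reflection_self, one_mul, one_mul]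
  · rw [hmn', div_mul_eq_mul_div, eq_div_iff hE, mul_comm]
    exact_mod_cast card_mul_card_fixedColorings_reflection_neg_mul hτ hf
  · rw [div_mul_eq_mul_div, one_mul, eq_div_iff hE, mul_comm]
    exact_mod_cast card_mul_card_fixedColorings_reflection_mul hτ hf hmn hmn'

theorem isPosDefOn_card_fixedColorings (τ : E → E) (L : ℕ) :
    IsPosDefOn Set.univ fun g : hyperoctahedral L => ((fixedColorings τ g).card : ℂ) := by
  refine ((isPosDefOn_card_fixedPoints (X := oddColorings τ L)
    (S := {g : Perm (window L) | ∀ i, g (-i) = -g i}) ?_).comp_hom (windowPerm L)).mono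
      fun g _ => windowPerm_neg g
  intro g hg x hx
  rw [mem_oddColorings] at hx ⊢
  intro i
  have hinv : g⁻¹ (-i) = -g⁻¹ i := by
    rw [Perm.inv_eq_iff_eq, hg, Perm.inv_def, apply_symm_apply]
  change x (g⁻¹ (-i)) = τ (x (g⁻¹ i))
  rw [hinv, hx]

theorem card_fixedColorings_one_pos [Nonempty E] (hτ : Function.Involutive τ) :
    0 < (fixedColorings τ (1 : hyperoctahedral L)).card := by
  refine Finset.card_pos.2 ⟨fun i => if 0 < (i : ℤ) then Classical.arbitrary E else
    τ (Classical.arbitrary E), mem_fixedColorings.2 ⟨fun i => ?_, fun _ => rfl⟩⟩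
  simp only [coe_neg_window, Left.neg_pos_iff]
  rcases (ne_zero_of_mem_window i.2).lt_or_gt with hi | hi
  · rw [if_pos hi, if_neg hi.not_gt, hτ]
  · rw [if_neg hi.not_gt, if_pos hi]

theorem isPosDefOn_phi_of_involutive [Nonempty E] (hτ : Function.Involutive τ) :
    IsPosDefOn BInfSet (phi (1 / Fintype.card E)
      ((Finset.univ.filter fun e => τ e = e).card / Fintype.card E)) := by
  refine isPosDefOn_BInfSet_of_hyperoctahedral fun L => isPosDefOn_univ_coe_iff.1 ?_
  rw [← isPosDefOn_mul_const_iff (Nat.cast_pos.2 (card_fixedColorings_one_pos (L := L) hτ))]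
  simpa only [← card_fixedColorings_eq hτ] using isPosDefOn_card_fixedColorings τ L

end OddColorings

section SufficientConditions

variable {M N : ℕ}

theorem isPosDefOn_phi_of_le (hNM : N ≤ M) (hM : M ≠ 0) :
    IsPosDefOn BInfSet (phi (1 / (M + N)) ((M - N) / (M + N))) := by
  let τ : Fin (M - N) ⊕ (Fin N ⊕ Fin N) → Fin (M - N) ⊕ (Fin N ⊕ Fin N) := Sum.map id Sum.swap
  have hτ : Function.Involutive τ := by
    rintro (k | k | k) <;> rfl
  have hfix : (Finset.univ.filter fun e => τ e = e).card = M - N := by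
    rw [Finset.card_filter, Fintype.sum_sum_type, Fintype.sum_sum_type]
    simp [τ]
  have hcard : Fintype.card (Fin (M - N) ⊕ (Fin N ⊕ Fin N)) = M + N := by
    simp only [Fintype.card_sum, Fintype.card_fin]
    omega
  have : Nonempty (Fin (M - N) ⊕ (Fin N ⊕ Fin N)) :=
    Fintype.card_pos_iff.1 (hcard ▸ by omega)
  simpa [hfix, hcard, hNM] using isPosDefOn_phi_of_involutive hτ

theorem isPosDefOn_phi_of_nat (hMN : M + N ≠ 0) :
    IsPosDefOn BInfSet (phi (1 / (M + N)) ((M - N) / (M + N))) := by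
  rcases le_total N M with h | h
  · exact isPosDefOn_phi_of_le h (by omega)
  · have hneg := isPosDefOn_phi_neg_right (isPosDefOn_phi_of_le h (by omega))
    rwa [← neg_div, neg_sub, add_comm (N : ℂ)] at hneg

theorem isPosDefOn_phi_of_int {ε : ℤ} (hε : ε = 1 ∨ ε = -1) (hMN : M + N ≠ 0) :
    IsPosDefOn BInfSet (phi (ε / (M + N)) ((M - N) / (M + N))) := by
  rcases hε with rfl | rfl
  · rw [Int.cast_one]
    exact isPosDefOn_phi_of_nat hMN
  · rw [Int.cast_neg, Int.cast_one, neg_div]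
    exact isPosDefOn_phi_neg_left (isPosDefOn_phi_of_nat hMN)

theorem isPosDefOn_phi_zero_left {r : ℝ} (hr : -1 ≤ r) (hr' : r ≤ 1) :
    IsPosDefOn BInfSet (phi 0 r) := by
  let M (d : ℕ) : ℕ := ⌊(1 + r) / 2 * d⌋₊
  have hM (d : ℕ) : M d ≤ d := Nat.floor_le_of_le <|
    mul_le_of_le_one_left d.cast_nonneg (by linarith)
  have hlim : Tendsto (fun d : ℕ => (M d : ℝ) / d) atTop (𝓝 ((1 + r) / 2)) :=
    (tendsto_nat_floor_mul_div_atTop (by linarith)).comp tendsto_natCast_atTop_atTop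
  have hqp : Tendsto (fun d : ℕ => ((1 / d : ℝ) : ℂ)) atTop (𝓝 0) :=
    (Complex.continuous_ofReal.tendsto 0).comp tendsto_one_div_atTop_nhds_zero_nat
  have hqm : Tendsto (fun d : ℕ => ((2 * (M d / d) - 1 : ℝ) : ℂ)) atTop (𝓝 r) := by
    refine (Complex.continuous_ofReal.tendsto r).comp ?_
    convert (hlim.const_mul 2).sub_const 1 using 2
    ring
  refine IsPosDefOn.of_tendsto (F := fun d : ℕ => phi (1 / d : ℝ) (2 * (M d / d) - 1 : ℝ)) ?_
    fun g _ h _ => (hqp.pow _).mul (hqm.pow _)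
  filter_upwards [eventually_ne_atTop 0] with d hd
  have hd' : (d : ℂ) ≠ 0 := Nat.cast_ne_zero.2 hd
  have hsum : (M d : ℂ) + (d - M d : ℕ) = d := by rw [Nat.cast_sub (hM d), add_sub_cancel]
  have hdiff : (M d : ℂ) - (d - M d : ℕ) = 2 * M d - d := by
    rw [Nat.cast_sub (hM d)]
    ring
  have h := isPosDefOn_phi_of_nat (M := M d) (N := d - M d) (by have := hM d; omega)
  rw [hsum, hdiff, sub_div, div_self hd', mul_div_assoc] at h
  push_cast
  exact h

end SufficientConditions

/-- classification of the parameters for which the signed reflection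
function is positive definite on B(∞). -/
theorem signed_reflection_posdef_iff (qp qm : ℂ) :
    IsPosDefOn BInfSet (phi qp qm) ↔
      ((∃ (M N : ℕ) (ε : ℤ), (ε = 1 ∨ ε = -1) ∧ M + N ≠ 0 ∧
          qp = (ε : ℂ) / ((M : ℂ) + (N : ℂ)) ∧
          qm = ((M : ℂ) - (N : ℂ)) / ((M : ℂ) + (N : ℂ))) ∨
        (qp = 0 ∧ ∃ r : ℝ, qm = (r : ℂ) ∧ -1 ≤ r ∧ r ≤ 1)) := by
  constructor
  · exact exists_params_of_isPosDefOn_phi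
  · rintro (⟨M, N, ε, hε, hMN, rfl, rfl⟩ | ⟨rfl, r, rfl, hr, hr'⟩)
    · exact isPosDefOn_phi_of_int hε hMN
    · exact isPosDefOn_phi_zero_left hr hr'

end TypeB
end
end

section
/- Let q ∈ ℂ. The reflection function σ ↦ q^{ℓ_R(σ)} on the infinite symmetric group S(∞) is positive definite if and only if q = 0 or q⁻¹ ∈ ℤ (i.e. q = 1/k for some nonzero integer k). -/
/-!
STATEMENT 6: on the infinite symmetric group S(∞) of finitary permutations of ℕ, the
reflection function σ ↦ q^{ℓ_R(σ)} (ℓ_R = minimal number of transpositions) is positive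
definite iff q = 0 or q = 1/k for some nonzero integer k.
-/

open scoped ComplexOrder

noncomputable section

namespace TypeA

/-- The infinite symmetric group S(∞): finitary permutations of ℕ. -/
def SInfSet : Set (Equiv.Perm ℕ) := {σ | {i : ℕ | σ i ≠ i}.Finite}

/-- The reflection length: the minimal number of transpositions whose product is σ
(with sInf ∅ = 0 by convention; the set is nonempty for every finitary σ). -/
def reflLen (σ : Equiv.Perm ℕ) : ℕ :=
  sInf {k : ℕ | ∃ r : Fin k → Equiv.Perm ℕ,
    (∀ t, ∃ a b : ℕ, a ≠ b ∧ r t = Equiv.swap a b) ∧ (List.ofFn r).prod = σ}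

/-- A function on a group is positive definite on a subset S. -/
def IsPosDefOn {G : Type*} [Group G] (S : Set G) (f : G → ℂ) : Prop :=
  ∀ (k : ℕ) (g : Fin k → G), (∀ i, g i ∈ S) → ∀ z : Fin k → ℂ,
    0 ≤ ∑ i : Fin k, ∑ j : Fin k, z i * (starRingEnd ℂ) (z j) * f ((g j)⁻¹ * g i)

/-!
If `τ` fixes `a ≠ b`, then `ℓ(swap a b * τ) = ℓ(τ) + 1`, and every permutation of a finite set is a
product of such steps. Each step divides by `k` the number of invariant colourings with `k` colours,
so `k ^ (-ℓ(σ))` is, up to a positive constant, the number of colourings fixed by `σ`: a permutation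
character, hence positive definite. Twisting by the sign character gives `q = -1/k`, and for `q = 0`
the function is the indicator of the trivial subgroup.

Conversely, the steps give `∑ σ : Perm (Fin n), q ^ ℓ(σ) = ∏ i < n, (1 + i q)`, which is nonnegative
when `q ^ ℓ` is positive definite. This forces `q` to be real, and if `q < 0` some factor has to
vanish, since the factors are eventually negative and the first negative one would make the product
negative. The case `q > 0` reduces to this one, again by twisting with the sign.
-/

section PositiveDefinite

variable {G H : Type*} [Group G] [Group H] {S : Set G} {f : G → ℂ}

lemma IsPosDefOn.comp_monoidHom (hf : IsPosDefOn S f) (φ : H →* G) {T : Set H}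
    (hφ : Set.MapsTo φ T S) : IsPosDefOn T (fun h => f (φ h)) := fun k h hT z => by
  simpa only [map_mul, map_inv] using hf k (fun i => φ (h i)) (fun i => hφ (hT i)) z

lemma IsPosDefOn.const_mul (hf : IsPosDefOn S f) {c : ℂ} (hc : 0 ≤ c) :
    IsPosDefOn S (fun g => c * f g) := fun k g hg z => by
  simpa only [Finset.mul_sum, mul_left_comm c] using mul_nonneg hc (hf k g hg z)

lemma IsPosDefOn.sum {ι : Type*} {s : Finset ι} {F : ι → G → ℂ}
    (hF : ∀ x ∈ s, IsPosDefOn S (F x)) : IsPosDefOn S (fun g => ∑ x ∈ s, F x g) :=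
  fun k g hg z => by
    have hsum := Finset.sum_nonneg fun x hx => hF x hx k g hg z
    rw [Finset.sum_comm] at hsum
    refine hsum.trans_eq (Finset.sum_congr rfl fun i _ => ?_)
    rw [Finset.sum_comm]
    exact Finset.sum_congr rfl fun j _ => (Finset.mul_sum ..).symm

lemma IsPosDefOn.character_mul (hf : IsPosDefOn S f) (χ : G →* ℂ)
    (hχ : ∀ g, (starRingEnd ℂ) (χ g) = χ g⁻¹) : IsPosDefOn S (fun g => χ g * f g) :=
  fun k g hg z => by
    refine (hf k g hg fun i => z i * χ (g i)).trans_eq ?_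
    refine Finset.sum_congr rfl fun i _ => Finset.sum_congr rfl fun j _ => ?_
    simp only [map_mul, hχ]
    ring

open Classical in
-- The kernel `[c j = c i]` is block diagonal, with an all-ones block for each value of `c`.
lemma sum_sum_mul_conj_ite_nonneg {ι T : Type*} [Fintype ι] (c : ι → T) (z : ι → ℂ) :
    0 ≤ ∑ i, ∑ j, z i * (starRingEnd ℂ) (z j) * (if c j = c i then 1 else 0) := by
  have hblock : ∑ i, ∑ j, z i * (starRingEnd ℂ) (z j) * (if c j = c i then 1 else 0) =
      ∑ t ∈ Finset.univ.image c,
        (∑ i with c i = t, z i) * (starRingEnd ℂ) (∑ i with c i = t, z i) := by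
    rw [← Finset.sum_fiberwise_of_maps_to fun i hi => Finset.mem_image_of_mem c hi]
    refine Finset.sum_congr rfl fun t _ => ?_
    rw [map_sum, Finset.sum_mul_sum]
    refine Finset.sum_congr rfl fun i hi => ?_
    simp only [(Finset.mem_filter.1 hi).2, mul_ite, mul_one, mul_zero, Finset.sum_filter]
  rw [hblock]
  exact Finset.sum_nonneg fun t _ => mul_star_self_nonneg _

lemma isPosDefOn_subgroup_indicator (K : Subgroup G) :
    IsPosDefOn S ((K : Set G).indicator 1) := fun k g _ z => by
  classical
  refine (sum_sum_mul_conj_ite_nonneg (fun i => (g i : G ⧸ K)) z).trans_eq ?_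
  simp only [QuotientGroup.eq, Set.indicator_apply, SetLike.mem_coe, Pi.one_apply]

lemma isPosDefOn_card_fixedBy (X : Type*) [Finite X] [MulAction G X] :
    IsPosDefOn S (fun g => (Nat.card (MulAction.fixedBy X g) : ℂ)) := by
  classical
  have := Fintype.ofFinite X
  have hcard (g : G) : (Nat.card (MulAction.fixedBy X g) : ℂ) =
      ∑ x : X, (MulAction.stabilizer G x : Set G).indicator 1 g := by
    simp [Set.indicator_apply, MulAction.mem_stabilizer_iff, MulAction.fixedBy,
      Fintype.card_subtype]
  simp only [hcard]
  exact IsPosDefOn.sum fun x _ => isPosDefOn_subgroup_indicator _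

lemma IsPosDefOn.sum_univ_nonneg [Fintype G] (hf : IsPosDefOn Set.univ f) : 0 ≤ ∑ g, f g := by
  have e := (Fintype.equivFin G).symm
  have hinner (h : G) : ∑ g, f (h⁻¹ * g) = ∑ g, f g := Equiv.sum_comp (Equiv.mulLeft h⁻¹) f
  have hdouble := hf _ e (fun _ => Set.mem_univ _) fun _ => 1
  simp only [map_one, one_mul] at hdouble
  rw [Finset.sum_comm] at hdouble
  have hinner_fin (j : Fin (Fintype.card G)) : ∑ i, f ((e j)⁻¹ * e i) = ∑ g, f g :=
    (e.sum_comp fun g => f ((e j)⁻¹ * g)).trans (hinner (e j))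
  simp only [hinner_fin, Finset.sum_const, Finset.card_univ, Fintype.card_fin,
    nsmul_eq_mul] at hdouble
  have hcard : (0 : ℂ) < Fintype.card G := by exact_mod_cast Fintype.card_pos
  exact le_of_mul_le_mul_left (by rwa [mul_zero]) hcard

end PositiveDefinite

section SwapLength

open Equiv Equiv.Perm
open scoped Pointwise

variable {α β : Type*} [DecidableEq α] [DecidableEq β]

/-- The reflection length of a permutation of an arbitrary type: the least `k` such that `σ` lies
in the pointwise power `{τ | τ.IsSwap} ^ k`. It is `0` when `σ` is not finitary. -/
def swapLength (σ : Perm α) : ℕ := sInf {k | σ ∈ {τ : Perm α | τ.IsSwap} ^ k}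

lemma reflLen_eq_swapLength (σ : Perm ℕ) : reflLen σ = swapLength σ := by
  refine congrArg sInf (Set.ext fun k => ?_)
  rw [Set.mem_ofPred_eq, Set.mem_ofPred_eq, Set.mem_pow]
  exact ⟨fun ⟨r, hr, hσ⟩ => ⟨fun t => ⟨r t, hr t⟩, hσ⟩,
    fun ⟨r, hσ⟩ => ⟨fun t => r t, fun t => (r t).2, hσ⟩⟩

lemma swapLength_le {k : ℕ} {σ : Perm α} (h : σ ∈ {τ : Perm α | τ.IsSwap} ^ k) :
    swapLength σ ≤ k := Nat.sInf_le h

lemma mem_pow_swapLength {k : ℕ} {σ : Perm α} (h : σ ∈ {τ : Perm α | τ.IsSwap} ^ k) :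
    σ ∈ {τ : Perm α | τ.IsSwap} ^ swapLength σ :=
  Nat.sInf_mem (s := {k | σ ∈ {τ : Perm α | τ.IsSwap} ^ k}) ⟨k, h⟩

lemma swapLength_one : swapLength (1 : Perm α) = 0 :=
  Nat.le_zero.1 (swapLength_le (by simp))

lemma swap_mul_mem_pow_succ {k : ℕ} {σ : Perm α} (h : σ ∈ {τ : Perm α | τ.IsSwap} ^ k) {a b : α}
    (hab : a ≠ b) : swap a b * σ ∈ {τ : Perm α | τ.IsSwap} ^ (k + 1) := by
  rw [pow_succ']
  exact Set.mul_mem_mul ⟨a, b, hab, rfl⟩ h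

lemma eq_swap_apply_of_isSwap {s : Perm α} (hs : s.IsSwap) {a : α} (ha : s a ≠ a) :
    s = swap a (s a) := by
  obtain ⟨b, c, -, rfl⟩ := hs
  obtain ⟨-, rfl | rfl⟩ := swap_apply_ne_self_iff.1 ha
  · rw [swap_apply_left]
  · rw [swap_apply_right, swap_comm]

lemma isSwap_swap_mul_mul_swap {s : Perm α} (hs : s.IsSwap) {a b : α} (hb : b ≠ a)
    (hsb : s b ≠ a) : (swap a (s b) * s * swap a b).IsSwap := by
  by_cases ha : s a = a
  · rwa [mul_assoc, mul_swap_eq_swap_mul, ha, swap_mul_self_mul]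
  · obtain ⟨p, hp, rfl⟩ : ∃ p, p ≠ a ∧ s = swap a p := ⟨s a, ha, eq_swap_apply_of_isSwap hs ha⟩
    have hbp : b ≠ p := by
      rintro rfl
      exact hsb (swap_apply_right a b)
    refine ⟨b, p, hbp, ?_⟩
    rw [swap_apply_of_ne_of_ne hb hbp, mul_swap_eq_swap_mul (swap a b) a p,
      swap_apply_left, swap_apply_of_ne_of_ne hp hbp.symm, mul_swap_mul_self]

-- The deleted letter is the one that moves `a` away from its place for the last time; the letters
-- on its left either stay the same or get conjugated into other swaps.
lemma exists_swap_apply_mul_mem_pow {k : ℕ} {σ : Perm α} (h : σ ∈ {τ : Perm α | τ.IsSwap} ^ k)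
    {a : α} (ha : σ a ≠ a) :
    ∃ i, k = i + 1 ∧ swap a (σ a) * σ ∈ {τ : Perm α | τ.IsSwap} ^ i := by
  induction k generalizing σ with
  | zero => exact absurd (by simp_all) ha
  | succ k ih =>
    refine ⟨k, rfl, ?_⟩
    rw [pow_succ'] at h
    obtain ⟨s, hs, τ, hτ, rfl⟩ := h
    by_cases hτa : τ a = a
    · simp only [Perm.mul_apply, hτa] at ha ⊢
      rwa [eq_swap_apply_of_isSwap hs ha, swap_apply_left, swap_mul_self_mul]
    · obtain ⟨i, rfl, hi⟩ := ih hτ hτa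
      have hfactor : swap a ((s * τ) a) * (s * τ) =
          swap a (s (τ a)) * s * swap a (τ a) * (swap a (τ a) * τ) := by
        simp only [Perm.mul_apply, mul_assoc, swap_mul_self_mul]
      rw [hfactor, pow_succ']
      exact Set.mul_mem_mul (isSwap_swap_mul_mul_swap hs hτa ha) hi

lemma swapLength_swap_mul {k : ℕ} {σ : Perm α} (hσ : σ ∈ {τ : Perm α | τ.IsSwap} ^ k) {a b : α}
    (ha : σ a = a) (hab : a ≠ b) : swapLength (swap a b * σ) = swapLength σ + 1 := by
  have hmem := swap_mul_mem_pow_succ (mem_pow_swapLength hσ) hab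
  have hab' : (swap a b * σ) a = b := by simp [ha]
  obtain ⟨i, hi, hdel⟩ := exists_swap_apply_mul_mem_pow (mem_pow_swapLength hmem)
    (a := a) (by rwa [hab', ne_comm])
  rw [hab', swap_mul_self_mul] at hdel
  exact le_antisymm (swapLength_le hmem) (hi ▸ Nat.succ_le_succ (swapLength_le hdel))

-- The side condition `τ a = a`, absent from `Equiv.Perm.swap_induction_on`, makes every step raise
-- `swapLength` by exactly one.
lemma swap_mul_induction_on [Finite α] {motive : Perm α → Prop} (σ : Perm α) (one : motive 1)
    (swap_mul : ∀ (a b : α) (τ : Perm α), a ≠ b → τ a = a → motive τ → motive (swap a b * τ)) :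
    motive σ := by
  have := Fintype.ofFinite α
  induction hn : σ.support.card using Nat.strong_induction_on generalizing σ with
  | h n ih =>
    by_cases hσ : σ = 1
    · rwa [hσ]
    · obtain ⟨a, ha⟩ : ∃ a, σ a ≠ a := by
        simpa [Equiv.ext_iff] using hσ
      rw [← swap_mul_self_mul a (σ a) σ]
      exact swap_mul a (σ a) _ ha.symm (by simp)
        (ih _ (hn ▸ card_support_swap_mul ha) _ rfl)

lemma exists_mem_pow_isSwap [Finite α] (σ : Perm α) : ∃ k, σ ∈ {τ : Perm α | τ.IsSwap} ^ k := by
  induction σ using swap_mul_induction_on with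
  | one => exact ⟨0, by simp⟩
  | swap_mul a b τ hab _ ih => exact ih.imp' _ fun k hk => swap_mul_mem_pow_succ hk hab

lemma swapLength_swap_mul_of_finite [Finite α] {σ : Perm α} {a b : α} (ha : σ a = a)
    (hab : a ≠ b) : swapLength (swap a b * σ) = swapLength σ + 1 :=
  let ⟨_, hσ⟩ := exists_mem_pow_isSwap σ
  swapLength_swap_mul hσ ha hab

lemma swapLength_eq_zero_iff [Finite α] {σ : Perm α} : swapLength σ = 0 ↔ σ = 1 := by
  refine ⟨fun h => ?_, fun h => h ▸ swapLength_one⟩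
  obtain ⟨k, hk⟩ := exists_mem_pow_isSwap σ
  simpa [h] using mem_pow_swapLength hk

lemma apply_embedding_of_map_swap [Finite α] (φ : Perm α →* Perm β) (e : α ↪ β)
    (hφ : ∀ a b, φ (swap a b) = swap (e a) (e b)) (σ : Perm α) (a : α) :
    φ σ (e a) = e (σ a) := by
  induction σ using swap_induction_on generalizing a with
  | one => simp
  | swap_mul τ x y _ ih => rw [map_mul, hφ, Perm.mul_apply, ih, ← e.injective.map_swap, mul_apply]

lemma swapLength_map [Finite α] (φ : Perm α →* Perm β) (e : α ↪ β)
    (hφ : ∀ a b, φ (swap a b) = swap (e a) (e b)) (σ : Perm α) :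
    swapLength (φ σ) = swapLength σ := by
  suffices (∃ k, φ σ ∈ {τ : Perm β | τ.IsSwap} ^ k) ∧ swapLength (φ σ) = swapLength σ from this.2
  induction σ using swap_mul_induction_on with
  | one => exact ⟨⟨0, by simp⟩, by simp only [map_one, swapLength_one]⟩
  | swap_mul a b τ hab ha ih =>
    obtain ⟨⟨k, hk⟩, hlen⟩ := ih
    have hab' := e.injective.ne hab
    have ha' : φ τ (e a) = e a := by rw [apply_embedding_of_map_swap φ e hφ, ha]
    rw [map_mul, hφ]
    exact ⟨⟨k + 1, swap_mul_mem_pow_succ hk hab'⟩, by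
      rw [swapLength_swap_mul hk ha' hab', swapLength_swap_mul_of_finite ha hab, hlen]⟩

lemma swapLength_ofSubtype (s : Finset α) (σ : Perm s) :
    swapLength (ofSubtype σ) = swapLength σ :=
  swapLength_map ofSubtype (Function.Embedding.subtype _) ofSubtype_swap_eq σ

lemma swapLength_permCongr [Finite α] (e : α ≃ β) (σ : Perm α) :
    swapLength (e.permCongr σ) = swapLength σ :=
  swapLength_map e.permCongrHom.toMonoidHom e.toEmbedding
    (fun a b => by ext x; simp [swap_apply_def, e.symm_apply_eq, apply_ite e]) σ

lemma swapLength_optionCongr [Finite α] (σ : Perm α) :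
    swapLength (optionCongr σ) = swapLength σ :=
  swapLength_map (.mk' optionCongr fun σ τ => by simp [Perm.mul_def]) .some optionCongr_swap σ

lemma sign_eq_neg_one_pow_swapLength [Fintype α] (σ : Perm α) : sign σ = (-1) ^ swapLength σ := by
  induction σ using swap_mul_induction_on with
  | one => simp [swapLength_one]
  | swap_mul a b τ hab ha ih =>
    rw [Perm.sign_mul, sign_swap hab, ih, swapLength_swap_mul_of_finite ha hab, pow_succ']

lemma sum_pow_swapLength_option {R : Type*} [CommSemiring R] (q : R) [Fintype α] :
    ∑ σ : Perm (Option α), q ^ swapLength σ =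
      (1 + Fintype.card α * q) * ∑ σ : Perm α, q ^ swapLength σ := by
  have hsome (a : α) (σ : Perm α) : q ^ swapLength (swap none (some a) * σ.optionCongr) =
      q * q ^ swapLength σ := by
    rw [swapLength_swap_mul_of_finite (by simp) (by simp), swapLength_optionCongr, pow_succ']
  have hnone (σ : Perm α) : q ^ swapLength (swap none none * σ.optionCongr) =
      q ^ swapLength σ := by
    rw [swap_self, ← Perm.one_def, one_mul, swapLength_optionCongr]
  simp only [← decomposeOption.symm.sum_comp, Fintype.sum_prod_type, Fintype.sum_option,
    decomposeOption_symm_apply, hnone, hsome, ← Finset.mul_sum, Finset.sum_const,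
    Finset.card_univ, nsmul_eq_mul]
  ring

lemma sum_pow_swapLength_congr {R : Type*} [CommSemiring R] (q : R) [Fintype α] [Fintype β]
    (e : α ≃ β) : ∑ σ : Perm α, q ^ swapLength σ = ∑ σ : Perm β, q ^ swapLength σ :=
  Fintype.sum_equiv e.permCongr _ _ fun σ => by rw [swapLength_permCongr]

lemma sum_pow_swapLength {R : Type*} [CommSemiring R] (q : R) [Fintype α] :
    ∑ σ : Perm α, q ^ swapLength σ = ∏ i ∈ Finset.range (Fintype.card α), (1 + i * q) := by
  rw [sum_pow_swapLength_congr q (Fintype.equivFin α)]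
  generalize Fintype.card α = n
  induction n with
  | zero => simp [swapLength_eq_zero_iff.2 (Subsingleton.elim _ _)]
  | succ n ih =>
    rw [sum_pow_swapLength_congr q (finSuccEquiv n), sum_pow_swapLength_option, ih,
      Fintype.card_fin, Finset.prod_range_succ, mul_comm]

end SwapLength

section Coloring

open Equiv Equiv.Perm

variable {α β : Type*} [DecidableEq α]

lemma comp_swap_mul_eq_iff {τ : Perm α} {a b : α} (ha : τ a = a) (f : α → β) :
    f ∘ (swap a b * τ) = f ↔ f ∘ τ = f ∧ f a = f b := by
  have hswap (h : f a = f b) : f ∘ swap a b = f := by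
    rw [comp_swap_eq_update, h, Function.update_eq_self, ← h, Function.update_eq_self]
  have hassoc : f ∘ (swap a b * τ) = (f ∘ swap a b) ∘ τ := rfl
  refine ⟨fun h => ?_, fun ⟨hτ, h⟩ => by rw [hassoc, hswap h, hτ]⟩
  have hfab : f a = f b := by simpa [ha] using (congrFun h a).symm
  rw [hassoc, hswap hfab] at h
  exact ⟨h, hfab⟩

lemma update_comp_perm_of_apply_eq {τ : Perm α} {a : α} (ha : τ a = a) {f : α → β}
    (hf : f ∘ τ = f) (c : β) : Function.update f a c ∘ τ = Function.update f a c := by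
  conv_lhs => rw [← ha]
  rw [Function.update_comp_eq_of_injective _ τ.injective, hf]

/-- A colouring is a function `f : α → β`. When `τ` fixes `a`, the colour of `a` in a `τ`-invariant
colouring is free, while `swap a b * τ` forces it to agree with that of `b`. -/
def invariantColoringEquiv {τ : Perm α} {a b : α} (ha : τ a = a) (hab : a ≠ b) :
    {f : α → β // f ∘ (swap a b * τ) = f} × β ≃ {f : α → β // f ∘ τ = f} where
  toFun p := ⟨Function.update p.1 a p.2,
    update_comp_perm_of_apply_eq ha ((comp_swap_mul_eq_iff ha _).1 p.1.2).1 _⟩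
  invFun f := ⟨⟨Function.update f a (f.1 b), (comp_swap_mul_eq_iff ha _).2
    ⟨update_comp_perm_of_apply_eq ha f.2 _, by simp [hab.symm]⟩⟩, f.1 a⟩
  left_inv := fun ⟨⟨f, hf⟩, c⟩ => by
    have hfab : f a = f b := ((comp_swap_mul_eq_iff ha _).1 hf).2
    simp [hab.symm, ← hfab]
  right_inv f := by simp

lemma card_invariant_coloring_mul_pow_swapLength [Finite α] (σ : Perm α) :
    Nat.card {f : α → β // f ∘ σ = f} * Nat.card β ^ swapLength σ = Nat.card (α → β) := by
  induction σ using swap_mul_induction_on with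
  | one => simp [swapLength_one]
  | swap_mul a b τ hab ha ih =>
    rw [swapLength_swap_mul_of_finite ha hab, pow_succ', ← mul_assoc, ← Nat.card_prod,
      Nat.card_congr (invariantColoringEquiv ha hab), ih]

end Coloring

section FinitePerm

open Equiv Equiv.Perm

variable {α : Type*} [DecidableEq α] [Finite α]

attribute [local instance] arrowAction in
lemma isPosDefOn_inv_card_pow_swapLength (β : Type*) [Finite β] [Nonempty β] :
    IsPosDefOn Set.univ (fun σ : Perm α => (Nat.card β : ℂ)⁻¹ ^ swapLength σ) := by
  have hfixed (σ : Perm α) : Nat.card {f : α → β // f ∘ σ = f} =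
      Nat.card (MulAction.fixedBy (α → β) σ) :=
    Nat.card_congr (Equiv.subtypeEquivRight fun f => eq_comm.trans (σ.comp_symm_eq f f).symm)
  have hβ : (Nat.card β : ℂ) ≠ 0 := by exact_mod_cast Nat.card_pos.ne'
  have hαβ : (Nat.card (α → β) : ℂ) ≠ 0 := by exact_mod_cast Nat.card_pos.ne'
  convert (isPosDefOn_card_fixedBy (S := Set.univ) (α → β)).const_mul
    (c := (Nat.card (α → β) : ℂ)⁻¹) (by positivity) using 2 with σ
  rw [← hfixed, inv_pow, eq_inv_mul_iff_mul_eq₀ hαβ, mul_inv_eq_iff_eq_mul₀ (pow_ne_zero _ hβ)]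
  exact_mod_cast (card_invariant_coloring_mul_pow_swapLength (β := β) σ).symm

lemma isPosDefOn_zero_pow_swapLength :
    IsPosDefOn Set.univ (fun σ : Perm α => (0 : ℂ) ^ swapLength σ) := by
  convert isPosDefOn_subgroup_indicator (S := Set.univ) (⊥ : Subgroup (Perm α)) using 2 with σ
  classical
  simp [zero_pow_eq, swapLength_eq_zero_iff, Set.indicator_apply]

lemma IsPosDefOn.neg_pow_swapLength {q : ℂ} {S : Set (Perm α)}
    (hq : IsPosDefOn S (fun σ => q ^ swapLength σ)) :
    IsPosDefOn S (fun σ => (-q) ^ swapLength σ) := by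
  have := Fintype.ofFinite α
  convert hq.character_mul ((Int.castRingHom ℂ).toMonoidHom.comp ((Units.coeHom ℤ).comp sign))
    (fun σ => by simp) using 2 with σ
  simp [neg_pow q, sign_eq_neg_one_pow_swapLength]

-- As `0⁻¹ = 0`, the case `k = 0` is about `q = 0`.
lemma isPosDefOn_intCast_inv_pow_swapLength (k : ℤ) :
    IsPosDefOn Set.univ (fun σ : Perm α => (k : ℂ)⁻¹ ^ swapLength σ) := by
  have hnat (n : ℕ) : IsPosDefOn Set.univ (fun σ : Perm α => (n : ℂ)⁻¹ ^ swapLength σ) := by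
    cases n with
    | zero => simpa using isPosDefOn_zero_pow_swapLength
    | succ n => simpa using isPosDefOn_inv_card_pow_swapLength (α := α) (Fin (n + 1))
  obtain ⟨n, rfl | rfl⟩ := k.eq_nat_or_neg
  · simpa using hnat n
  · simpa [inv_neg] using (hnat n).neg_pow_swapLength

lemma IsPosDefOn.prod_one_add_mul_nonneg {q : ℂ}
    (hq : IsPosDefOn Set.univ (fun σ : Perm α => q ^ swapLength σ)) :
    0 ≤ ∏ i ∈ Finset.range (Nat.card α), (1 + i * q) := by
  have := Fintype.ofFinite α
  rw [Nat.card_eq_fintype_card, ← sum_pow_swapLength]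
  exact hq.sum_univ_nonneg

end FinitePerm

section Finitary

open Equiv Equiv.Perm

/-- The group of finitary permutations of an arbitrary type `α`, as a set; `SInfSet` is the case
`α = ℕ`. -/
def finitaryPerms (α : Type*) : Set (Perm α) := {σ | {i | σ i ≠ i}.Finite}

variable {α : Type*} [DecidableEq α]

lemma ofSubtype_mem_finitaryPerms {s : Finset α} (σ : Perm s) :
    ofSubtype σ ∈ finitaryPerms α :=
  s.finite_toSet.subset fun _ hi => of_not_not fun his => hi (ofSubtype_apply_of_not_mem σ his)

lemma mem_range_ofSubtype {s : Finset α} {σ : Perm α} (hσ : ∀ i, σ i ≠ i → i ∈ s) :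
    σ ∈ (ofSubtype : Perm s →* Perm α).range := by
  refine ⟨σ.subtypePerm fun x => ?_, ofSubtype_subtypePerm _ hσ⟩
  by_cases hx : σ x = x
  · rw [hx]
  · exact iff_of_true (hσ _ (σ.injective.ne hx)) (hσ x hx)

lemma isPosDefOn_finitaryPerms_iff {f : Perm α → ℂ} :
    IsPosDefOn (finitaryPerms α) f ↔
      ∀ s : Finset α, IsPosDefOn Set.univ (fun σ : Perm s => f (ofSubtype σ)) := by
  refine ⟨fun h s => h.comp_monoidHom _ fun σ _ => ofSubtype_mem_finitaryPerms σ,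
    fun h k g hg z => ?_⟩
  have hfin : (⋃ i, {x | g i x ≠ x}).Finite := Set.finite_iUnion hg
  have hrange (i : Fin k) : g i ∈ (ofSubtype : Perm hfin.toFinset →* Perm α).range :=
    mem_range_ofSubtype fun x hx => hfin.mem_toFinset.2 (Set.mem_iUnion_of_mem i hx)
  choose τ hτ using hrange
  simpa [hτ] using h hfin.toFinset k τ (fun _ => Set.mem_univ _) z

lemma isPosDefOn_finitaryPerms_pow_swapLength_iff {q : ℂ} :
    IsPosDefOn (finitaryPerms α) (fun σ => q ^ swapLength σ) ↔
      ∀ s : Finset α, IsPosDefOn Set.univ (fun σ : Perm s => q ^ swapLength σ) := by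
  simp only [isPosDefOn_finitaryPerms_iff, swapLength_ofSubtype]

lemma prod_one_add_mul_nonneg_of_isPosDefOn [Infinite α] {q : ℂ}
    (hq : ∀ s : Finset α, IsPosDefOn Set.univ (fun σ : Perm s => q ^ swapLength σ)) (n : ℕ) :
    0 ≤ ∏ i ∈ Finset.range n, (1 + i * q) := by
  obtain ⟨s, rfl⟩ := Infinite.exists_subset_card_eq α n
  simpa using (hq s).prod_one_add_mul_nonneg

end Finitary

lemma exists_one_add_mul_eq_zero_of_prod_nonneg {R : Type*} [CommRing R]
    [LinearOrder R] [IsStrictOrderedRing R] [Archimedean R] {r : R} (hr : r < 0)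
    (hprod : ∀ n : ℕ, 0 ≤ ∏ i ∈ Finset.range n, (1 + i * r)) : ∃ n : ℕ, 1 + n * r = 0 := by
  by_contra! hne
  have hpos (n : ℕ) : 0 < ∏ i ∈ Finset.range n, (1 + i * r) :=
    (hprod n).lt_of_ne' (Finset.prod_ne_zero_iff.2 fun i _ => hne i)
  have hfactor (n : ℕ) : 0 < 1 + n * r :=
    pos_of_mul_pos_right ((hpos (n + 1)).trans_eq (Finset.prod_range_succ _ n)) (hpos n).le
  obtain ⟨n, hn⟩ := Archimedean.arch 1 (neg_pos.2 hr)
  rw [nsmul_eq_mul] at hn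
  linarith [hfactor n]

lemma eq_zero_or_eq_intCast_inv_of_prod_nonneg {K : Type*} [Field K] [LinearOrder K]
    [IsStrictOrderedRing K] [Archimedean K] {r : K}
    (hpos : ∀ n : ℕ, 0 ≤ ∏ i ∈ Finset.range n, (1 + i * r))
    (hneg : ∀ n : ℕ, 0 ≤ ∏ i ∈ Finset.range n, (1 + i * -r)) :
    r = 0 ∨ ∃ k : ℤ, k ≠ 0 ∧ r = (k : K)⁻¹ := by
  have hinv {k : ℤ} (hk : (k : K) * r = 1) : r = 0 ∨ ∃ k : ℤ, k ≠ 0 ∧ r = (k : K)⁻¹ :=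
    .inr ⟨k, by rintro rfl; simp at hk, eq_inv_of_mul_eq_one_right hk⟩
  rcases lt_trichotomy r 0 with hr | hr | hr
  · obtain ⟨n, hn⟩ := exists_one_add_mul_eq_zero_of_prod_nonneg hr hpos
    exact hinv (k := -n) (by push_cast; linarith)
  · exact .inl hr
  · obtain ⟨n, hn⟩ := exists_one_add_mul_eq_zero_of_prod_nonneg (neg_neg_of_pos hr) hneg
    exact hinv (k := n) (by push_cast; linarith)

lemma exists_ofReal_eq_of_one_add_nonneg {q : ℂ} (hq : 0 ≤ 1 + q) : ∃ r : ℝ, (r : ℂ) = q := by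
  have him : 0 = q.im := by simpa using (Complex.le_def.1 hq).2
  exact ⟨q.re, Complex.ext rfl him⟩

theorem reflection_function_posdef_iff_symm_general {α : Type*} [Infinite α] [DecidableEq α]
    (q : ℂ) : IsPosDefOn (finitaryPerms α) (fun σ => q ^ swapLength σ) ↔
      (q = 0 ∨ ∃ k : ℤ, k ≠ 0 ∧ q = ((k : ℂ))⁻¹) := by
  rw [isPosDefOn_finitaryPerms_pow_swapLength_iff]
  constructor
  · intro hq
    have hpos := prod_one_add_mul_nonneg_of_isPosDefOn hq
    have hneg := prod_one_add_mul_nonneg_of_isPosDefOn fun s => (hq s).neg_pow_swapLength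
    obtain ⟨r, rfl⟩ := exists_ofReal_eq_of_one_add_nonneg (q := q)
      (by simpa [Finset.prod_range_succ] using hpos 2)
    norm_cast at hpos hneg
    obtain rfl | ⟨k, hk, rfl⟩ := eq_zero_or_eq_intCast_inv_of_prod_nonneg hpos hneg
    · exact .inl Complex.ofReal_zero
    · exact .inr ⟨k, hk, by push_cast; rfl⟩
  · rintro (rfl | ⟨k, -, rfl⟩) s
    · exact isPosDefOn_zero_pow_swapLength
    · exact isPosDefOn_intCast_inv_pow_swapLength k

/-- the reflection function q^{ℓ_R} is positive definite on S(∞) iff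
q = 0 or q⁻¹ ∈ ℤ.  (The exponent is a natural number, so q^{ℓ_R(id)} = q^0 = 1 even
when q = 0.) -/
theorem reflection_function_posdef_iff_symm (q : ℂ) :
    IsPosDefOn SInfSet (fun σ => q ^ reflLen σ) ↔
      (q = 0 ∨ ∃ k : ℤ, k ≠ 0 ∧ q = ((k : ℂ))⁻¹) := by
  simp only [reflLen_eq_swapLength]
  exact reflection_function_posdef_iff_symm_general q

end TypeA
end
end
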